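/- arXiv:2010.04521 — 9 statements merged into one kernel-verified Lean document; each statement's English description precedes it below -/
import Mathlib

section
/- Let n ≥ 2 and let S be a real (n−1)×n matrix of rank n−1 whose columns s_1, …, s_n satisfy S·u = 0 (u the all-ones vector). Let S† be the Moore–Penrose pseudoinverse of S and let s'_i ∈ ℝ^{n−1} denote the i-th row of S† regarded as a vector. Then: (a) S†·S = I − u·uᵀ/n; (b) for each i and all j, k different from i, ⟨s'_i, s_j − s_k⟩ = 0 (so s'_i is normal to the hyperplane spanned by the facet opposite vertex i); (c) ⟨s'_i, s_i⟩ = 1 − 1/n > 0 (so s'_i is the inner normal of that facet); and (d) the Moore–Penrose pseudoinverse of the Gram matrix M = Sᵀ·S satisfies (M†) i j = ⟨s'_i, s'_j⟩ for all i, j. -/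
open Matrix

/-- `B` is the Moore–Penrose pseudoinverse of `A` (the four Penrose conditions;
the pseudoinverse is unique, so this characterizes `A†`). -/
def IsMoorePenrose {k l : Type*} [Fintype k] [Fintype l]
    (A : Matrix k l ℝ) (B : Matrix l k ℝ) : Prop :=
  A * B * A = A ∧ B * A * B = B ∧ (A * B)ᵀ = A * B ∧ (B * A)ᵀ = B * A

theorem IsMoorePenrose.unique' {k l : Type*} [Fintype k] [Fintype l]
    {A : Matrix k l ℝ} {B C : Matrix l k ℝ} (hB : IsMoorePenrose A B)
    (hC : IsMoorePenrose A C) : B = C := by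
  obtain ⟨b1, b2, b3, b4⟩ := hB
  obtain ⟨c1, c2, c3, c4⟩ := hC
  have h1 : A * B = A * C := by
    have h : (A * C * (A * B))ᵀ = (A * B)ᵀ := by
      rw [← Matrix.mul_assoc (A * C) A B, c1]
    rw [Matrix.transpose_mul, b3, c3, ← Matrix.mul_assoc (A * B) A C, b1] at h
    exact h.symm
  have h2 : B * A = C * A := by
    have h : (B * A * (C * A))ᵀ = (B * A)ᵀ := by
      rw [Matrix.mul_assoc B A (C * A), ← Matrix.mul_assoc A C A, c1]
    rw [Matrix.transpose_mul, b4, c4, Matrix.mul_assoc C A (B * A), ← Matrix.mul_assoc A B A, b1] at h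
    exact h.symm
  rw [← b2, h2, Matrix.mul_assoc, h1, ← Matrix.mul_assoc, c2]

theorem IsMoorePenrose.gram {k l : Type*} [Fintype k] [Fintype l]
    {A : Matrix k l ℝ} {B : Matrix l k ℝ} (hB : IsMoorePenrose A B) :
    IsMoorePenrose (Aᵀ * A) (B * Bᵀ) := by
  obtain ⟨b1, b2, b3, b4⟩ := hB
  have e1 : Aᵀ * A * (B * Bᵀ) = B * A := by
    calc Aᵀ * A * (B * Bᵀ) = Aᵀ * (A * B) * Bᵀ := by simp only [Matrix.mul_assoc]
      _ = Aᵀ * (A * B)ᵀ * Bᵀ := by rw [b3]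
      _ = (B * A * B * A)ᵀ := by simp only [Matrix.transpose_mul, Matrix.mul_assoc]
      _ = B * A := by rw [b2, b4]
  have e2 : B * Bᵀ * (Aᵀ * A) = B * A := by
    calc B * Bᵀ * (Aᵀ * A) = B * (A * B)ᵀ * A := by
          simp only [Matrix.transpose_mul, Matrix.mul_assoc]
      _ = B * A := by rw [b3, ← Matrix.mul_assoc, b2]
  refine ⟨?_, ?_, ?_, ?_⟩
  · rw [Matrix.mul_assoc, e2, Matrix.mul_assoc, ← Matrix.mul_assoc A, b1]
  · rw [e2, ← Matrix.mul_assoc, b2]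
  · rw [e1, b4]
  · rw [e2, b4]

theorem stmt_4 {n : ℕ} (hn : 2 ≤ n)
    (S : Matrix (Fin (n - 1)) (Fin n) ℝ)
    (hrank : S.rank = n - 1)
    (hSu : S *ᵥ (fun _ => (1 : ℝ)) = 0)
    (Sd : Matrix (Fin n) (Fin (n - 1)) ℝ) (hSd : IsMoorePenrose S Sd)
    (Md : Matrix (Fin n) (Fin n) ℝ) (hMd : IsMoorePenrose (Sᵀ * S) Md) :
    -- (a) S†·S = I − u·uᵀ/n
    Sd * S = 1 - (n : ℝ)⁻¹ • Matrix.of (fun _ _ => (1 : ℝ)) ∧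
    -- (b) the i-th row of S† is orthogonal to all edge vectors of the facet opposite vertex i
    (∀ i j k : Fin n, j ≠ i → k ≠ i → ∑ l, Sd i l * (S l j - S l k) = 0) ∧
    -- (c) ⟨s'_i, s_i⟩ = 1 − 1/n > 0
    (∀ i : Fin n, ∑ l, Sd i l * S l i = 1 - (n : ℝ)⁻¹) ∧ (0 < 1 - (n : ℝ)⁻¹) ∧
    -- (d) (M†) i j = ⟨s'_i, s'_j⟩ for M = Sᵀ·S
    (∀ i j : Fin n, Md i j = ∑ l, Sd i l * Sd j l) := by
  have hn0 : (n : ℝ) ≠ 0 := by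
    have : n ≠ 0 := by omega
    exact_mod_cast this
  have hker : ∀ v : Fin n → ℝ, S *ᵥ v = 0 → ∃ c : ℝ, ∀ i, v i = c := by
    intro v hv
    have hr := LinearMap.finrank_range_add_finrank_ker S.mulVecLin
    have hr' : Module.finrank ℝ (LinearMap.range S.mulVecLin) = n - 1 := hrank
    have hk : Module.finrank ℝ (LinearMap.ker S.mulVecLin) = 1 := by
      rw [hr', Module.finrank_fin_fun] at hr
      omega
    let u : LinearMap.ker S.mulVecLin := ⟨fun _ => 1, by simpa using hSu⟩
    have hu : u ≠ 0 := by
      intro h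
      have := congrFun (congrArg Subtype.val h) (⟨0, by omega⟩ : Fin n)
      simp [u] at this
    obtain ⟨c, hc⟩ := (finrank_eq_one_iff_of_nonzero' u hu).1 hk ⟨v, by simpa using hv⟩
    refine ⟨c, fun i => ?_⟩
    have := congrFun (congrArg Subtype.val hc) i
    simpa [u] using this.symm
  have ha : Sd * S = 1 - (n : ℝ)⁻¹ • Matrix.of (fun _ _ => (1 : ℝ)) := by
    obtain ⟨b1, b2, b3, b4⟩ := hSd
    have hQ0 : S * (1 - Sd * S) = 0 := by
      rw [Matrix.mul_sub, ← Matrix.mul_assoc, b1, Matrix.mul_one, sub_self]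
    have hQt : (1 - Sd * S)ᵀ = 1 - Sd * S := by
      rw [Matrix.transpose_sub, b4, Matrix.transpose_one]
    have hQu : (1 - Sd * S) *ᵥ (fun _ => (1 : ℝ)) = fun _ => 1 := by
      rw [Matrix.sub_mulVec, ← Matrix.mulVec_mulVec, hSu]
      simp
    have key : 1 - Sd * S = (n : ℝ)⁻¹ • Matrix.of (fun _ _ => (1 : ℝ)) := by
      generalize 1 - Sd * S = Q at hQ0 hQt hQu
      have hcol : ∀ j, ∃ c : ℝ, ∀ i, Q i j = c := by
        intro j
        apply hker (fun i => Q i j)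
        ext i
        exact congrFun (congrFun hQ0 i) j
      choose c hc using hcol
      have hsym : ∀ i j, Q i j = Q j i := fun i j => (congrFun (congrFun hQt j) i)
      have hcc : ∀ i j, c i = c j := fun i j => by
        rw [← hc i j, ← hc j i]; exact hsym j i
      ext i j
      have h1 := congrFun hQu i
      have h2 : ∀ k, Q i k = Q i j := fun k => by rw [hc, hc]; exact hcc _ _
      simp [Matrix.mulVec, dotProduct, h2] at h1
      simp only [Matrix.smul_apply, Matrix.of_apply, smul_eq_mul, mul_one]
      exact eq_inv_of_mul_eq_one_right h1
    rw [← key]; simp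
  have hent : ∀ i j, ∑ l, Sd i l * S l j = (1 : Matrix (Fin n) (Fin n) ℝ) i j - (n : ℝ)⁻¹ := by
    intro i j
    have := congrFun (congrFun ha i) j
    simpa [Matrix.mul_apply] using this
  refine ⟨ha, ?_, ?_, ?_, ?_⟩
  · intro i j k hj hk
    simp only [mul_sub, Finset.sum_sub_distrib, hent, Matrix.one_apply_ne hj.symm,
      Matrix.one_apply_ne hk.symm, sub_self]
  · intro i
    rw [hent, Matrix.one_apply_eq]
  · have : (1 : ℝ) < n := by exact_mod_cast hn
    have := inv_lt_one_of_one_lt₀ this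
    linarith
  · intro i j
    rw [hMd.unique' hSd.gram]
    simp [Matrix.mul_apply]
end

section
/- Let n ≥ 2. The map Q ↦ Q† (Moore–Penrose pseudoinverse) is a bijection from the set of n×n Laplacian matrices onto the set of real symmetric positive semidefinite n×n matrices M with M·u = 0, rank n−1, and all off-diagonal entries of M† nonpositive (the canonical Gram matrices of hyperacute Simplices on n vertices); its inverse is M ↦ M†. -/
open Matrix

/-- A Laplacian matrix: symmetric, nonpositive off-diagonal entries, zero row sums,
and irreducible. -/
def IsLaplacian {m : Type*} [Fintype m] [DecidableEq m] (Q : Matrix m m ℝ) : Prop :=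
  Q.IsSymm ∧ (∀ i j, i ≠ j → Q i j ≤ 0) ∧ (Q *ᵥ (fun _ => (1 : ℝ)) = 0) ∧
  ∀ V : Finset m, V.Nonempty → V ≠ Finset.univ → ∃ i ∈ V, ∃ j ∉ V, Q i j ≠ 0

/-- The Moore–Penrose pseudoinverse of a real square matrix (it always exists and
is unique, so this picks out exactly `A†`). -/
noncomputable def pinv {n : ℕ} (A : Matrix (Fin n) (Fin n) ℝ) :
    Matrix (Fin n) (Fin n) ℝ := by
  classical exact if h : ∃ B, IsMoorePenrose A B then h.choose else 0

/-- The set of `n × n` Laplacian matrices. -/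
def LapSet (n : ℕ) : Set (Matrix (Fin n) (Fin n) ℝ) := {Q | IsLaplacian Q}

/-- The canonical Gram matrices of hyperacute Simplices on `n` vertices:
symmetric positive semidefinite matrices `M` with `M·u = 0`, rank `n − 1`,
and all off-diagonal entries of `M†` nonpositive. -/
def HypGramSet (n : ℕ) : Set (Matrix (Fin n) (Fin n) ℝ) :=
  {M | M.IsSymm ∧ M.PosSemidef ∧ M *ᵥ (fun _ => (1 : ℝ)) = 0 ∧
    M.rank = n - 1 ∧ ∀ i j, i ≠ j → pinv M i j ≤ 0}

/-- Uniqueness of the Moore–Penrose pseudoinverse. -/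
theorem mp_unique {n : ℕ} {A B C : Matrix (Fin n) (Fin n) ℝ}
    (hB : IsMoorePenrose A B) (hC : IsMoorePenrose A C) : B = C := by
  obtain ⟨b1, b2, b3, b4⟩ := hB
  obtain ⟨c1, c2, c3, c4⟩ := hC
  have e1 : A * B = A * C := by
    calc A * B = (A * B)ᵀ := b3.symm
      _ = (A * C * (A * B))ᵀ := by rw [← Matrix.mul_assoc, c1]
      _ = (A * B)ᵀ * (A * C)ᵀ := by rw [transpose_mul]
      _ = A * B * (A * C) := by rw [b3, c3]
      _ = A * C := by rw [← Matrix.mul_assoc, b1]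
  have e2 : B * A = C * A := by
    calc B * A = (B * A)ᵀ := b4.symm
      _ = (B * A * (C * A))ᵀ := by
        rw [Matrix.mul_assoc, ← Matrix.mul_assoc A, c1]
      _ = (C * A)ᵀ * (B * A)ᵀ := by rw [transpose_mul]
      _ = C * A * (B * A) := by rw [b4, c4]
      _ = C * A := by rw [Matrix.mul_assoc, ← Matrix.mul_assoc A, b1]
  calc B = B * A * B := b2.symm
    _ = C * A * C := by rw [e2, Matrix.mul_assoc, e1, ← Matrix.mul_assoc]
    _ = C := c2

theorem pinv_eq {n : ℕ} {A B : Matrix (Fin n) (Fin n) ℝ}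
    (hB : IsMoorePenrose A B) : pinv A = B := by
  have h : ∃ B, IsMoorePenrose A B := ⟨B, hB⟩
  have : pinv A = h.choose := by
    unfold pinv
    exact dif_pos h
  rw [this]
  exact mp_unique h.choose_spec hB

theorem mp_symm {n : ℕ} {A B : Matrix (Fin n) (Fin n) ℝ}
    (hB : IsMoorePenrose A B) : IsMoorePenrose B A :=
  ⟨hB.2.1, hB.1, hB.2.2.2, hB.2.2.1⟩

/-- Symmetric positive semidefinite with kernel exactly the constants. -/
def Good {n : ℕ} (A : Matrix (Fin n) (Fin n) ℝ) : Prop :=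
  A.IsSymm ∧ A.PosSemidef ∧ A *ᵥ (fun _ => (1 : ℝ)) = 0 ∧
    ∀ x, A *ᵥ x = 0 → ∀ i j, x i = x j

theorem Good.pinv {n : ℕ} (hn : 2 ≤ n) {A : Matrix (Fin n) (Fin n) ℝ} (hA : Good A) :
    Good (pinv A) ∧ pinv (pinv A) = A := by
  obtain ⟨hs, hp, hu, hk⟩ := hA
  have hn0 : (n : ℝ) ≠ 0 := by positivity
  set J : Matrix (Fin n) (Fin n) ℝ := Matrix.of fun _ _ => (n : ℝ)⁻¹ with hJ
  have hJs : Jᵀ = J := by ext i j; simp [hJ]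
  have hJJ : J * J = J := by
    ext i j; simp [hJ, Matrix.mul_apply, hn0]
  have hAJ : A * J = 0 := by
    ext i j
    have := congrFun hu i
    simp only [Matrix.mulVec, dotProduct, mul_one, Pi.zero_apply] at this
    simp [hJ, Matrix.mul_apply, ← Finset.sum_mul, this]
  have hJA : J * A = 0 := by
    have := congrArg transpose hAJ
    rwa [transpose_mul, hJs, hs.eq, transpose_zero] at this
  have hJx : ∀ x i j, (J *ᵥ x) i = (J *ᵥ x) j := by
    intro x i j; simp [hJ, Matrix.mulVec, dotProduct]
  have hJu : J *ᵥ (fun _ => (1 : ℝ)) = fun _ => 1 := by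
    ext i; simp [hJ, Matrix.mulVec, dotProduct, hn0]
  have hunit : IsUnit (A + J) := by
    rw [← Matrix.mulVec_injective_iff_isUnit]
    have key : ∀ x, (A + J) *ᵥ x = 0 → x = 0 := by
      intro x hx
      have h1 : J *ᵥ x = 0 := by
        have := congrArg (fun v => J *ᵥ v) hx
        simpa [Matrix.mulVec_mulVec, Matrix.mul_add, hJA, hJJ] using this
      have h2 : A *ᵥ x = 0 := by
        rwa [Matrix.add_mulVec, h1, add_zero] at hx
      have h3 := hk x h2
      ext i
      have h4 : x = x i • (fun _ => (1 : ℝ)) := by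
        ext j; simp [h3 j i]
      rw [h4, Matrix.mulVec_smul, hJu] at h1
      simpa using congrFun h1 i
    intro x y hxy
    have : (A + J) *ᵥ (x - y) = 0 := by
      rw [Matrix.mulVec_sub]; exact sub_eq_zero.2 hxy
    exact sub_eq_zero.1 (key _ this)
  have hdet : IsUnit (A + J).det := (Matrix.isUnit_iff_isUnit_det _).1 hunit
  set K := (A + J)⁻¹ with hK
  have k1 : (A + J) * K = 1 := Matrix.mul_nonsing_inv _ hdet
  have k2 : K * (A + J) = 1 := Matrix.nonsing_inv_mul _ hdet
  have hKJ : K * J = J := by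
    have : (A + J) * J = J := by rw [Matrix.add_mul, hAJ, hJJ, zero_add]
    calc K * J = K * ((A + J) * J) := by rw [this]
      _ = J := by rw [← Matrix.mul_assoc, k2, Matrix.one_mul]
  have hJK : J * K = J := by
    have : J * (A + J) = J := by rw [Matrix.mul_add, hJA, hJJ, zero_add]
    calc J * K = (J * (A + J)) * K := by rw [this]
      _ = J := by rw [Matrix.mul_assoc, k1, Matrix.mul_one]
  have hKs : Kᵀ = K := by
    rw [hK, Matrix.transpose_nonsing_inv, transpose_add, hs.eq, hJs]
  set B := K - J with hB
  have hAB : A * B = 1 - J := by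
    have : A * K = 1 - J := by
      rw [Matrix.add_mul, hJK] at k1
      exact eq_sub_of_add_eq k1
    rw [hB, Matrix.mul_sub, this, hAJ, sub_zero]
  have hBA : B * A = 1 - J := by
    have : K * A = 1 - J := by
      rw [Matrix.mul_add, hKJ] at k2
      exact eq_sub_of_add_eq k2
    rw [hB, Matrix.sub_mul, this, hJA, sub_zero]
  have hJB : J * B = 0 := by rw [hB, Matrix.mul_sub, hJK, hJJ, sub_self]
  have hBJ : B * J = 0 := by rw [hB, Matrix.sub_mul, hKJ, hJJ, sub_self]
  have hBs : Bᵀ = B := by rw [hB, transpose_sub, hKs, hJs]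
  have hmp : IsMoorePenrose A B := by
    refine ⟨?_, ?_, ?_, ?_⟩
    · rw [hAB, Matrix.sub_mul, hJA, Matrix.one_mul, sub_zero]
    · rw [hBA, Matrix.sub_mul, hJB, Matrix.one_mul, sub_zero]
    · rw [hAB, transpose_sub, hJs, transpose_one]
    · rw [hBA, transpose_sub, hJs, transpose_one]
  rw [pinv_eq hmp]
  refine ⟨⟨hBs, ?_, ?_, ?_⟩, pinv_eq (mp_symm hmp)⟩
  · have := hp.conjTranspose_mul_mul_same B
    rwa [Matrix.conjTranspose_eq_transpose_of_trivial, hBs, hmp.2.1] at this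
  · rw [← hJu, Matrix.mulVec_mulVec, hBJ, Matrix.zero_mulVec]
  · intro x hx i j
    have h1 : x = J *ᵥ x := by
      have := congrArg (fun v => A *ᵥ v) hx
      simp only [Matrix.mulVec_mulVec, hAB, Matrix.sub_mulVec, Matrix.one_mulVec,
        Matrix.mulVec_zero] at this
      exact sub_eq_zero.1 this
    rw [h1]; exact hJx x i j

theorem ker_iff_rank {n : ℕ} (hn : 2 ≤ n) {A : Matrix (Fin n) (Fin n) ℝ}
    (hu : A *ᵥ (fun _ => (1 : ℝ)) = 0) :
    A.rank = n - 1 ↔ ∀ x, A *ᵥ x = 0 → ∀ i j, x i = x j := by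
  have hrn := LinearMap.finrank_range_add_finrank_ker A.mulVecLin
  have hr : A.rank = Module.finrank ℝ (LinearMap.range A.mulVecLin) := rfl
  rw [← hr, Module.finrank_fin_fun] at hrn
  have h1 : A.rank = n - 1 ↔ Module.finrank ℝ (LinearMap.ker A.mulVecLin) = 1 := by omega
  have i0 : Fin n := ⟨0, by omega⟩
  let u : LinearMap.ker A.mulVecLin := ⟨fun _ => 1, by simpa using hu⟩
  have hu0 : u ≠ 0 := by
    intro h
    have := congrFun (congrArg Subtype.val h) i0
    simp [u] at this
  rw [h1, finrank_eq_one_iff_of_nonzero' u hu0]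
  constructor
  · intro h x hx i j
    obtain ⟨c, hc⟩ := h ⟨x, by simpa using hx⟩
    have hc' := congrArg Subtype.val hc
    have e : ∀ k, x k = c := fun k => by
      have := congrFun hc' k
      simpa [u] using this.symm
    rw [e i, e j]
  · rintro h ⟨x, hx⟩
    refine ⟨x i0, ?_⟩
    apply Subtype.ext
    ext k
    simpa [u] using h x (by simpa using hx) i0 k

theorem lap_good {n : ℕ} {Q : Matrix (Fin n) (Fin n) ℝ} (hQ : IsLaplacian Q) : Good Q := by
  obtain ⟨hs, ho, hu, hirr⟩ := hQ
  have hrow : ∀ i, ∑ j, Q i j = 0 := by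
    intro i
    have := congrFun hu i
    simpa [Matrix.mulVec, dotProduct] using this
  have hsy : ∀ i j, Q j i = Q i j := fun i j => hs.apply i j
  refine ⟨hs, ?_, hu, ?_⟩
  · refine PosSemidef.of_dotProduct_mulVec_nonneg ?_ ?_
    · rw [Matrix.IsHermitian, Matrix.conjTranspose_eq_transpose_of_trivial]; exact hs
    · intro x
      have e0 : star x ⬝ᵥ (Q *ᵥ x) = ∑ i, ∑ j, Q i j * (x i * x j) := by
        simp only [dotProduct, Matrix.mulVec, Finset.mul_sum, Pi.star_apply, star_trivial]
        refine Finset.sum_congr rfl fun i _ => Finset.sum_congr rfl fun j _ => by ring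
      have e1 : ∑ i, ∑ j, Q i j * (x i) ^ 2 = 0 := by
        refine Finset.sum_eq_zero fun i _ => ?_
        rw [← Finset.sum_mul, hrow, zero_mul]
      have e2 : ∑ i, ∑ j, Q i j * (x j) ^ 2 = 0 := by
        rw [Finset.sum_comm, ← e1]
        refine Finset.sum_congr rfl fun i _ => Finset.sum_congr rfl fun j _ => by rw [hsy]
      have e3 : ∑ i, ∑ j, Q i j * (x i - x j) ^ 2 ≤ 0 := by
        refine Finset.sum_nonpos fun i _ => Finset.sum_nonpos fun j _ => ?_
        by_cases hij : i = j
        · simp [hij]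
        · exact mul_nonpos_of_nonpos_of_nonneg (ho i j hij) (sq_nonneg _)
      have e4 : ∑ i, ∑ j, Q i j * (x i - x j) ^ 2
          = ∑ i, ∑ j, Q i j * (x i) ^ 2 + ∑ i, ∑ j, Q i j * (x j) ^ 2
            - 2 * ∑ i, ∑ j, Q i j * (x i * x j) := by
        simp only [Finset.mul_sum, ← Finset.sum_add_distrib, ← Finset.sum_sub_distrib]
        refine Finset.sum_congr rfl fun i _ => Finset.sum_congr rfl fun j _ => by ring
      rw [e0]
      linarith
  · intro x hx a b
    obtain ⟨m, -, hm⟩ := Finset.exists_max_image Finset.univ x ⟨a, Finset.mem_univ a⟩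
    have hV : (Finset.univ.filter fun i => x i = x m) = Finset.univ := by
      by_contra hne
      obtain ⟨i, hi, j, hj, hij⟩ := hirr _ ⟨m, by simp⟩ hne
      simp only [Finset.mem_filter, Finset.mem_univ, true_and] at hi hj
      have hsum : ∑ k, Q i k * (x k - x i) = 0 := by
        have h1 := congrFun hx i
        simp only [Matrix.mulVec, dotProduct, Pi.zero_apply] at h1
        simp only [mul_sub, Finset.sum_sub_distrib, ← Finset.sum_mul, hrow, h1]
        simp
      have hnn : ∀ k ∈ Finset.univ, 0 ≤ Q i k * (x k - x i) := by
        intro k _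
        by_cases hik : i = k
        · simp [hik]
        · refine mul_nonneg_of_nonpos_of_nonpos (ho i k hik) ?_
          have := hm k (Finset.mem_univ k)
          linarith
      have := (Finset.sum_eq_zero_iff_of_nonneg hnn).1 hsum j (Finset.mem_univ j)
      rcases mul_eq_zero.1 this with h | h
      · exact hij h
      · exact hj (by linarith)
    have hall : ∀ i, x i = x m := by
      intro i
      have : i ∈ Finset.univ.filter fun i => x i = x m := by rw [hV]; simp
      simpa using this
    rw [hall a, hall b]

theorem good_lap {n : ℕ} {Q : Matrix (Fin n) (Fin n) ℝ} (hQ : Good Q)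
    (ho : ∀ i j, i ≠ j → Q i j ≤ 0) : IsLaplacian Q := by
  obtain ⟨hs, hp, hu, hk⟩ := hQ
  refine ⟨hs, ho, hu, ?_⟩
  intro V hV hV'
  by_contra! hcon
  obtain ⟨a, ha⟩ := hV
  obtain ⟨b, hb⟩ : ∃ b, b ∉ V := by
    by_contra! h
    exact hV' (Finset.eq_univ_iff_forall.2 h)
  have := hk (fun i => if i ∈ V then 1 else 0) ?_ a b
  · simp [ha, hb] at this
  · ext i
    by_cases hi : i ∈ V
    · rw [← hu]
      simp only [Matrix.mulVec, dotProduct]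
      refine Finset.sum_congr rfl fun j _ => ?_
      by_cases hj : j ∈ V
      · simp [hj]
      · simp [hcon i hi j hj]
    · simp only [Matrix.mulVec, dotProduct, Pi.zero_apply]
      refine Finset.sum_eq_zero fun j _ => ?_
      by_cases hj : j ∈ V
      · have h1 := hcon j hj i hi
        rw [hs.apply i j] at h1
        simp [h1]
      · simp [hj]

theorem stmt_6 {n : ℕ} (hn : 2 ≤ n) :
    Set.BijOn pinv (LapSet n) (HypGramSet n) ∧
    Set.InvOn pinv pinv (LapSet n) (HypGramSet n) := by
  have hG : ∀ M ∈ HypGramSet n, Good M := fun M hM =>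
    ⟨hM.1, hM.2.1, hM.2.2.1, (ker_iff_rank hn hM.2.2.1).1 hM.2.2.2.1⟩
  have hinv : Set.InvOn pinv pinv (LapSet n) (HypGramSet n) :=
    ⟨fun Q hQ => ((lap_good hQ).pinv hn).2, fun M hM => ((hG M hM).pinv hn).2⟩
  refine ⟨hinv.bijOn ?_ ?_, hinv⟩
  · intro Q hQ
    obtain ⟨g, e⟩ := (lap_good hQ).pinv hn
    refine ⟨g.1, g.2.1, g.2.2.1, (ker_iff_rank hn g.2.2.1).2 g.2.2.2, ?_⟩
    rw [e]
    exact hQ.2.1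
  · intro M hM
    exact good_lap ((hG M hM).pinv hn).1 hM.2.2.2.2
end

section
/- Let n ≥ 2, let Q be an n×n Laplacian matrix with pseudoinverse Q†, let ζ ∈ ℝⁿ be the vector of diagonal entries of Q†, let u be the all-ones vector, r = (1/2)·Q·ζ + u/n, R² = (1/2)·ζᵀ·(r + u/n), and let Ω be the n×n matrix with entries Ω i j = ζ_i + ζ_j − 2(Q†) i j (the effective resistance matrix). Then the (n+1)×(n+1) block matrix N with blocks [[4R², −2rᵀ], [−2r, Q]] is invertible and N⁻¹ = −(1/2)·[[0, uᵀ], [u, Ω]] (Fiedler's identity). -/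
open Matrix

/-- The kernel of a Laplacian consists of constant vectors (maximum principle). -/
theorem laplacian_ker_const {n : ℕ} (hn : 2 ≤ n) (Q : Matrix (Fin n) (Fin n) ℝ)
    (hQ : IsLaplacian Q) (x : Fin n → ℝ) (hx : Q *ᵥ x = 0) (a b : Fin n) : x a = x b := by
  obtain ⟨-, hoff, hrow, hirr⟩ := hQ
  haveI : Nonempty (Fin n) := ⟨⟨0, by omega⟩⟩
  obtain ⟨p, hp⟩ := Finite.exists_max x
  by_cases hV : (Finset.univ.filter fun i => x i = x p) = Finset.univ
  · have h : ∀ i, x i = x p := fun i => by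
      have := Finset.mem_univ i
      rw [← hV] at this
      simpa using this
    rw [h a, h b]
  · exfalso
    obtain ⟨i, hi, j, hj, hij⟩ := hirr _ ⟨p, by simp⟩ hV
    have hi' : x i = x p := by simpa using hi
    have hj' : x j ≠ x p := by simpa using hj
    have hne : i ≠ j := fun h => hj' (h ▸ hi')
    have h1 : ∑ k, Q i k * x k = 0 := congrFun hx i
    have h2 : ∑ k, Q i k * 1 = 0 := congrFun hrow i
    have h3 : ∑ k, Q i k * (x k - x p) = 0 := by
      simp only [mul_sub, Finset.sum_sub_distrib, ← Finset.sum_mul, h1]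
      simp only [mul_one] at h2
      simp [h2]
    have hnn : ∀ k ∈ Finset.univ, 0 ≤ Q i k * (x k - x p) := by
      intro k _
      by_cases hk : i = k
      · subst hk; simp [hi']
      · exact mul_nonneg_of_nonpos_of_nonpos (hoff i k hk) (by linarith [hp k])
    have h4 := (Finset.sum_eq_zero_iff_of_nonneg hnn).1 h3 j (Finset.mem_univ j)
    rcases mul_eq_zero.1 h4 with h | h
    · exact hij h
    · exact hj' (by linarith)

/-- Fiedler's identity. -/
theorem stmt_7 {n : ℕ} (hn : 2 ≤ n) (Q : Matrix (Fin n) (Fin n) ℝ)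
    (hQ : IsLaplacian Q)
    (Qd : Matrix (Fin n) (Fin n) ℝ) (hQd : IsMoorePenrose Q Qd)
    (ζ : Fin n → ℝ) (hζ : ∀ i, ζ i = Qd i i)
    (r : Fin n → ℝ)
    (hr : r = (1 / 2 : ℝ) • (Q *ᵥ ζ) + (n : ℝ)⁻¹ • (fun _ => (1 : ℝ)))
    (R2 : ℝ)
    (hR2 : R2 = (1 / 2 : ℝ) * (ζ ⬝ᵥ (r + (n : ℝ)⁻¹ • (fun _ => (1 : ℝ)))))
    (Ω : Matrix (Fin n) (Fin n) ℝ)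
    (hΩ : ∀ i j, Ω i j = ζ i + ζ j - 2 * Qd i j)
    (N : Matrix (Unit ⊕ Fin n) (Unit ⊕ Fin n) ℝ)
    (hN : N = Matrix.fromBlocks (Matrix.of fun _ _ => 4 * R2)
      (Matrix.of fun _ j => -2 * r j) (Matrix.of fun i _ => -2 * r i) Q) :
    IsUnit N ∧
    N⁻¹ = (-(1 / 2) : ℝ) • Matrix.fromBlocks 0
      (Matrix.of fun _ _ => (1 : ℝ)) (Matrix.of fun _ _ => (1 : ℝ)) Ω := by
  have hker := laplacian_ker_const hn Q hQ
  obtain ⟨hsym, -, hrow, -⟩ := hQ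
  obtain ⟨hA, hB, hAB, hBA⟩ := hQd
  have hn0 : (n : ℝ) ≠ 0 := by positivity
  set u : Fin n → ℝ := fun _ => (1 : ℝ) with hu
  have hsymm : Qᵀ = Q := hsym
  have huQ : u ᵥ* Q = 0 := by rw [← Matrix.mulVec_transpose, hsymm, hrow]
  have hBu : (Q * Qd) *ᵥ u = 0 := by
    rw [← hAB, Matrix.mulVec_transpose, ← Matrix.vecMul_vecMul, huQ, Matrix.zero_vecMul]
  have huB : u ᵥ* Qd = 0 := by
    rw [← hB, ← Matrix.vecMul_vecMul, ← hBA, Matrix.vecMul_transpose, ← Matrix.mulVec_mulVec,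
      hrow, Matrix.mulVec_zero, Matrix.zero_vecMul]
  have hE : Q * (1 - Q * Qd) = 0 := by
    have h : (1 - Q * Qd) * Q = 0 := by rw [sub_mul, one_mul, hA, sub_self]
    have h' := congrArg Matrix.transpose h
    rwa [Matrix.transpose_mul, Matrix.transpose_sub, hAB, hsymm, Matrix.transpose_one,
      Matrix.transpose_zero] at h'
  have hcol : ∀ a b j, (1 - Q * Qd) a j = (1 - Q * Qd) b j := by
    intro a b j
    refine hker (fun i => (1 - Q * Qd) i j) ?_ a b
    ext i
    exact congrFun (congrFun hE i) j
  have hEs : ∀ a b, (1 - Q * Qd) a b = (1 - Q * Qd) b a := by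
    intro a b
    have h : (1 - Q * Qd)ᵀ = 1 - Q * Qd := by
      rw [Matrix.transpose_sub, hAB, Matrix.transpose_one]
    exact congrFun (congrFun h b) a
  have hK : ∀ i j, (1 - Q * Qd) i j = (n : ℝ)⁻¹ := by
    intro i j
    have h1 : (1 - Q * Qd) *ᵥ u = u := by
      rw [Matrix.sub_mulVec, hBu, Matrix.one_mulVec, sub_zero]
    have h2 : ∑ k, (1 - Q * Qd) i k * 1 = 1 := congrFun h1 i
    have h3 : ∀ k, (1 - Q * Qd) i k * 1 = (1 - Q * Qd) i j := fun k => by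
      rw [mul_one, hEs i k, hcol k j i, hEs j i]
    rw [Finset.sum_congr rfl (fun k _ => h3 k)] at h2
    simp only [Finset.sum_const, Finset.card_univ, Fintype.card_fin, nsmul_eq_mul] at h2
    exact eq_inv_of_mul_eq_one_right h2
  have hP : ∀ i j, (Q * Qd) i j = (1 : Matrix (Fin n) (Fin n) ℝ) i j - (n : ℝ)⁻¹ := by
    intro i j
    have := hK i j
    rw [Matrix.sub_apply] at this
    linarith
  -- scalar consequences
  have hQu : ∀ i, ∑ k, Q i k = 0 := fun i => by
    have h : ∑ k, Q i k * 1 = 0 := congrFun hrow i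
    simpa using h
  have hri : ∀ i, r i = 1 / 2 * (Q *ᵥ ζ) i + (n : ℝ)⁻¹ := by
    intro i; rw [hr]; simp [hu]
  have hQζ : u ⬝ᵥ (Q *ᵥ ζ) = 0 := by
    rw [Matrix.dotProduct_mulVec, huQ, zero_dotProduct]
  have hrsum : ∑ k, r k = 1 := by
    have h : ∑ k, (Q *ᵥ ζ) k = 0 := by simpa [dotProduct, hu] using hQζ
    simp only [hri, Finset.sum_add_distrib, ← Finset.mul_sum, h]
    simp [hn0]
  have hrQd : ∀ j, ∑ k, r k * Qd k j = 1 / 2 * (ζ j - (∑ k, ζ k) * (n : ℝ)⁻¹) := by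
    intro j
    have h : r ᵥ* Qd = (1 / 2 : ℝ) • (ζ ᵥ* (Q * Qd)) := by
      rw [hr, Matrix.add_vecMul, Matrix.smul_vecMul, Matrix.smul_vecMul, huB, smul_zero, add_zero,
        ← Matrix.vecMul_vecMul, ← Matrix.vecMul_transpose, hsymm]
    have h' : ∑ k, r k * Qd k j = 1 / 2 * ∑ k, ζ k * (Q * Qd) k j := congrFun h j
    rw [h']
    simp only [hP, mul_sub, Finset.sum_sub_distrib, ← Finset.sum_mul, Matrix.one_apply]
    simp
  have hR : 2 * R2 = ∑ k, r k * ζ k + (∑ k, ζ k) * (n : ℝ)⁻¹ := by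
    rw [hR2, dotProduct_add, dotProduct_smul, dotProduct_comm ζ r]
    simp [dotProduct, hu]
    ring
  have hrΩ : ∀ j, ∑ k, r k * Ω k j = 2 * R2 := by
    intro j
    have h : ∀ k, r k * Ω k j = r k * ζ k + r k * ζ j - 2 * (r k * Qd k j) := fun k => by
      rw [hΩ]; ring
    simp only [h, Finset.sum_add_distrib, Finset.sum_sub_distrib, ← Finset.mul_sum,
      ← Finset.sum_mul, hrsum, hrQd, hR]
    ring
  have hQΩ : ∀ i j, ∑ k, Q i k * Ω k j =
      2 * r i - 2 * (1 : Matrix (Fin n) (Fin n) ℝ) i j := by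
    intro i j
    have h : ∀ k, Q i k * Ω k j = Q i k * ζ k + Q i k * ζ j - 2 * (Q i k * Qd k j) := fun k => by
      rw [hΩ]; ring
    have h1 : ∑ k, Q i k * Qd k j = (Q * Qd) i j := rfl
    have h2 : ∑ k, Q i k * ζ k = (Q *ᵥ ζ) i := rfl
    simp only [h, Finset.sum_add_distrib, Finset.sum_sub_distrib, ← Finset.mul_sum,
      ← Finset.sum_mul, hQu, h1, h2, hP, hri]
    ring
  have hmul : N * ((-(1 / 2) : ℝ) • Matrix.fromBlocks 0
      (Matrix.of fun _ _ => (1 : ℝ)) (Matrix.of fun _ _ => (1 : ℝ)) Ω) = 1 := by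
    rw [hN, Matrix.mul_smul, Matrix.fromBlocks_multiply, Matrix.fromBlocks_smul,
      ← Matrix.fromBlocks_one]
    congr 1
    · ext i j
      simp [Matrix.mul_apply, ← Finset.mul_sum, hrsum]
    · ext i j
      simp [Matrix.mul_apply, mul_assoc, ← Finset.mul_sum, hrΩ]
      ring
    · ext i j
      simp [Matrix.mul_apply, hQu]
    · ext i j
      simp [Matrix.mul_apply, hQΩ]
      ring
  exact ⟨IsUnit.of_mul_eq_one _ hmul, Matrix.inv_eq_right_inv hmul⟩
end

section
/- Let n ≥ 2, let Q be an n×n Laplacian matrix, and let S be a real (n−1)×n matrix with S·u = 0 and Sᵀ·S = Q†, with columns s_1, …, s_n. Let ζ be the vector of diagonal entries of Q†, r = (1/2)·Q·ζ + u/n, and R² = (1/2)·ζᵀ·(r + u/n). Then uᵀ·r = 1 and for every index i, ‖S·r − s_i‖² = R²; that is, S·r is the circumcenter of the simplex with vertices s_1, …, s_n and √(R²) is its circumradius. -/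
open Matrix

theorem lap_ker_const {n : ℕ} (hn : 2 ≤ n) (Q : Matrix (Fin n) (Fin n) ℝ)
    (hQ : IsLaplacian Q) (x : Fin n → ℝ) (hx : Q *ᵥ x = 0) : ∃ c, ∀ i, x i = c := by
  obtain ⟨_, hneg, hu, hirr⟩ := hQ
  haveI : Nonempty (Fin n) := ⟨⟨0, by omega⟩⟩
  obtain ⟨m, hm⟩ := Finite.exists_max x
  refine ⟨x m, ?_⟩
  by_contra hcon
  have hV : (Finset.univ.filter (fun i => x i = x m)) ≠ Finset.univ := by
    intro h
    apply hcon
    intro i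
    have := Finset.mem_univ i
    rw [← h] at this
    exact (Finset.mem_filter.1 this).2
  obtain ⟨i, hi, j, hj, hij⟩ := hirr _ ⟨m, by simp⟩ hV
  have hi : x i = x m := by simpa using hi
  have hj : x j ≠ x m := by simpa using hj
  have h1 : ∑ k, Q i k * x k = 0 := congrFun hx i
  have h2 : ∑ k, Q i k * 1 = 0 := congrFun hu i
  have h3 : ∑ k, Q i k * (x k - x m) = 0 := by
    simp only [mul_one] at h2
    simp only [mul_sub, Finset.sum_sub_distrib, ← Finset.sum_mul, h1, h2]
    simp
  have h4 : ∀ k ∈ Finset.univ, 0 ≤ Q i k * (x k - x m) := by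
    intro k _
    by_cases hk : i = k
    · subst hk
      simp [hi]
    · exact mul_nonneg_of_nonpos_of_nonpos (hneg i k hk) (by linarith [hm k])
  have h5 := (Finset.sum_eq_zero_iff_of_nonneg h4).1 h3 j (Finset.mem_univ j)
  rcases mul_eq_zero.1 h5 with h | h
  · exact hij h
  · exact hj (by linarith)

/-- `S·r` is the circumcenter and `√R²` the circumradius of the simplex whose
vertex matrix is `S`. -/
theorem stmt_8 {n : ℕ} (hn : 2 ≤ n) (Q : Matrix (Fin n) (Fin n) ℝ)
    (hQ : IsLaplacian Q)
    (Qd : Matrix (Fin n) (Fin n) ℝ) (hQd : IsMoorePenrose Q Qd)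
    (S : Matrix (Fin (n - 1)) (Fin n) ℝ)
    (hSu : S *ᵥ (fun _ => (1 : ℝ)) = 0) (hS : Sᵀ * S = Qd)
    (ζ : Fin n → ℝ) (hζ : ∀ i, ζ i = Qd i i)
    (r : Fin n → ℝ)
    (hr : r = (1 / 2 : ℝ) • (Q *ᵥ ζ) + (n : ℝ)⁻¹ • (fun _ => (1 : ℝ)))
    (R2 : ℝ)
    (hR2 : R2 = (1 / 2 : ℝ) * (ζ ⬝ᵥ (r + (n : ℝ)⁻¹ • (fun _ => (1 : ℝ))))) :
    (fun _ => (1 : ℝ)) ⬝ᵥ r = 1 ∧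
    ∀ i : Fin n, ∑ k, ((S *ᵥ r) k - S k i) ^ 2 = R2 := by
  have hker := lap_ker_const hn Q hQ
  obtain ⟨hsym, _, hu, _⟩ := hQ
  obtain ⟨hm1, _, _, hm4⟩ := hQd
  set u : Fin n → ℝ := fun _ => (1 : ℝ) with hudef
  have hn0 : (n : ℝ) ≠ 0 := by
    have : n ≠ 0 := by omega
    exact_mod_cast this
  have huu : u ⬝ᵥ u = n := by simp [hudef, dotProduct]
  have huQ : ∀ v, u ⬝ᵥ (Q *ᵥ v) = 0 := by
    intro v
    rw [dotProduct_mulVec, ← mulVec_transpose, hsym.eq, hu, zero_dotProduct]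
  have hur : u ⬝ᵥ r = 1 := by
    rw [hr, dotProduct_add, dotProduct_smul, dotProduct_smul, huQ, huu]
    simp [hn0]
  refine ⟨hur, ?_⟩
  have hQdu : Qd *ᵥ u = 0 := by
    rw [← hS, ← mulVec_mulVec, hSu, mulVec_zero]
  obtain ⟨c, hc⟩ := hker (ζ - (Qd * Q) *ᵥ ζ) (by
    rw [mulVec_sub, mulVec_mulVec, ← Matrix.mul_assoc, hm1, sub_self])
  have hp : (Qd * Q) *ᵥ ζ = ζ - c • u := by
    ext i
    have := hc i
    simp only [Pi.sub_apply, Pi.smul_apply, smul_eq_mul, hudef, mul_one] at this ⊢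
    linarith
  have hc2 : u ⬝ᵥ ζ = n * c := by
    have h0 : u ⬝ᵥ ((Qd * Q) *ᵥ ζ) = 0 := by
      rw [dotProduct_mulVec, ← mulVec_transpose, hm4, ← mulVec_mulVec, hu, mulVec_zero,
        zero_dotProduct]
    rw [hp, dotProduct_sub, dotProduct_smul, huu, smul_eq_mul] at h0
    linarith
  have hQr : Qd *ᵥ r = (1 / 2 : ℝ) • (ζ - c • u) := by
    rw [hr, mulVec_add, mulVec_smul, mulVec_smul, hQdu, mulVec_mulVec, hp]
    simp
  have hR : R2 = 1 / 2 * (r ⬝ᵥ ζ + c) := by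
    rw [hR2, dotProduct_add, dotProduct_smul, dotProduct_comm ζ u, hc2, dotProduct_comm ζ r,
      smul_eq_mul]
    field_simp
  intro i
  have e1 : ∑ k, (S *ᵥ r) k * (S *ᵥ r) k = 1 / 2 * (r ⬝ᵥ ζ - c) := by
    have h : (S *ᵥ r) ⬝ᵥ (S *ᵥ r) = r ⬝ᵥ (Qd *ᵥ r) := by
      rw [← hS, ← mulVec_mulVec, dotProduct_mulVec r, vecMul_transpose]
    change (S *ᵥ r) ⬝ᵥ (S *ᵥ r) = _
    rw [h, hQr, dotProduct_smul, dotProduct_sub, dotProduct_smul, dotProduct_comm r u, hur]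
    simp
  have e2 : ∑ k, S k i * (S *ᵥ r) k = 1 / 2 * (ζ i - c) := by
    have h : (Sᵀ *ᵥ (S *ᵥ r)) i = (Qd *ᵥ r) i := by
      rw [mulVec_mulVec, hS]
    rw [hQr] at h
    have h' : (Sᵀ *ᵥ (S *ᵥ r)) i = ∑ k, S k i * (S *ᵥ r) k := rfl
    rw [← h', h]
    simp [hudef]
  have e3 : ∑ k, S k i * S k i = ζ i := by
    rw [hζ, ← hS]
    rfl
  have e : ∀ k, ((S *ᵥ r) k - S k i) ^ 2 =
      (S *ᵥ r) k * (S *ᵥ r) k - 2 * (S k i * (S *ᵥ r) k) + S k i * S k i := by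
    intro k
    ring
  simp only [e, Finset.sum_add_distrib, Finset.sum_sub_distrib, ← Finset.mul_sum]
  rw [e1, e2, e3, hR]
  ring
end

section
/- Let n ≥ 2, let Q be an n×n Laplacian matrix, let ζ = diag(Q†), r = (1/2)·Q·ζ + u/n, R² = (1/2)·ζᵀ·(r + u/n), and let Ω be the matrix with entries Ω i j = ζ_i + ζ_j − 2(Q†) i j. Then R² > 0, Ω is invertible, and Ω⁻¹ = −(1/2)·(Q − r·rᵀ/R²). -/
open Matrix

theorem lap_quad {n : ℕ} (Q : Matrix (Fin n) (Fin n) ℝ) (hQ : IsLaplacian Q) (x : Fin n → ℝ) :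
    x ⬝ᵥ (Q *ᵥ x) = ∑ i, ∑ j, (-(1/2) : ℝ) * (Q i j * (x i - x j) ^ 2) := by
  obtain ⟨hs, -, hu, -⟩ := hQ
  have hrow : ∀ i, ∑ j, Q i j = 0 := by
    intro i
    have := congrFun hu i
    simpa [Matrix.mulVec, dotProduct] using this
  have h1 : ∑ i, ∑ j, Q i j * (x i) ^ 2 = 0 := by
    simp_rw [← Finset.sum_mul, hrow]; simp
  have h2 : ∑ i, ∑ j, Q i j * (x j) ^ 2 = 0 := by
    rw [Finset.sum_comm, ← h1]
    refine Finset.sum_congr rfl fun i _ => Finset.sum_congr rfl fun j _ => ?_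
    rw [hs.apply i j]
  have h3 : x ⬝ᵥ (Q *ᵥ x) = ∑ i, ∑ j, Q i j * (x i * x j) := by
    simp only [Matrix.mulVec, dotProduct, Finset.mul_sum]
    refine Finset.sum_congr rfl fun i _ => Finset.sum_congr rfl fun j _ => ?_
    ring
  have h4 : ∑ i, ∑ j, (-(1/2) : ℝ) * (Q i j * (x i - x j) ^ 2)
      = -(1/2) * (∑ i, ∑ j, Q i j * (x i) ^ 2) - (1/2) * (∑ i, ∑ j, Q i j * (x j) ^ 2)
        + ∑ i, ∑ j, Q i j * (x i * x j) := by
    simp only [Finset.mul_sum, ← Finset.sum_sub_distrib, ← Finset.sum_add_distrib]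
    refine Finset.sum_congr rfl fun i _ => Finset.sum_congr rfl fun j _ => ?_
    ring
  rw [h4, h1, h2, h3]; ring

theorem lap_term_nonneg {n : ℕ} (Q : Matrix (Fin n) (Fin n) ℝ) (hQ : IsLaplacian Q)
    (x : Fin n → ℝ) (i j : Fin n) : 0 ≤ (-(1/2) : ℝ) * (Q i j * (x i - x j) ^ 2) := by
  by_cases h : i = j
  · subst h; simp
  · have := mul_nonneg (neg_nonneg.2 (hQ.2.1 i j h)) (sq_nonneg (x i - x j))
    linarith

theorem lap_nonneg {n : ℕ} (Q : Matrix (Fin n) (Fin n) ℝ) (hQ : IsLaplacian Q)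
    (x : Fin n → ℝ) : 0 ≤ x ⬝ᵥ (Q *ᵥ x) := by
  rw [lap_quad Q hQ]
  exact Finset.sum_nonneg fun i _ => Finset.sum_nonneg fun j _ => lap_term_nonneg Q hQ x i j

theorem lap_ker {n : ℕ} (Q : Matrix (Fin n) (Fin n) ℝ) (hQ : IsLaplacian Q)
    (x : Fin n → ℝ) (hx : x ⬝ᵥ (Q *ᵥ x) = 0) (i j : Fin n) : x i = x j := by
  rw [lap_quad Q hQ, Finset.sum_eq_zero_iff_of_nonneg
    (fun i _ => Finset.sum_nonneg fun j _ => lap_term_nonneg Q hQ x i j)] at hx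
  have key : ∀ a b, Q a b ≠ 0 → x a = x b := by
    intro a b hab
    have h := hx a (Finset.mem_univ _)
    rw [Finset.sum_eq_zero_iff_of_nonneg (fun j _ => lap_term_nonneg Q hQ x a j)] at h
    have h' := h b (Finset.mem_univ _)
    have h3 : (x a - x b) ^ 2 = 0 := by
      rcases mul_eq_zero.1 h' with h1 | h1
      · norm_num at h1
      · exact (mul_eq_zero.1 h1).resolve_left hab
    exact sub_eq_zero.1 (pow_eq_zero_iff (two_ne_zero) |>.1 h3)
  by_contra hne
  obtain ⟨a, ha, b, hb, hab⟩ := hQ.2.2.2 (Finset.univ.filter fun k => x k = x j)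
    ⟨j, by simp⟩ (by
      intro h
      have : i ∈ Finset.univ.filter fun k => x k = x j := by rw [h]; simp
      exact hne (by simpa using this))
  have ha' : x a = x j := by simpa using ha
  have hb' : x b ≠ x j := by simpa using hb
  exact hb' ((key a b hab).symm.trans ha')

theorem lap_proj {n : ℕ} (hn : 2 ≤ n) (Q : Matrix (Fin n) (Fin n) ℝ) (hQ : IsLaplacian Q)
    (M : Matrix (Fin n) (Fin n) ℝ) (hM : Mᵀ = M) (hQM : Q * M = 0)
    (hMu : M *ᵥ (fun _ => (1 : ℝ)) = fun _ => 1) (i j : Fin n) : M i j = (n : ℝ)⁻¹ := by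
  have hcol : ∀ a b c, M a c = M b c := by
    intro a b c
    refine lap_ker Q hQ (fun k => M k c) ?_ a b
    have : Q *ᵥ (fun k => M k c) = 0 := by
      ext k
      have := congrFun (congrFun hQM k) c
      simpa [Matrix.mul_apply, Matrix.mulVec, dotProduct] using this
    rw [this]; simp
  have hsym : ∀ a b, M a b = M b a := fun a b => by
    conv_lhs => rw [← hM]
    rfl
  have hall : ∀ k, M i k = M i j := by
    intro k
    rw [hsym i k, hcol k j i, hsym j i]
  have h := congrFun hMu i
  simp only [Matrix.mulVec, dotProduct, mul_one, hall, Finset.sum_const, Finset.card_univ,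
    Fintype.card_fin, nsmul_eq_mul] at h
  have hn0 : (n : ℝ) ≠ 0 := by positivity
  field_simp
  linarith

theorem stmt_10 {n : ℕ} (hn : 2 ≤ n) (Q : Matrix (Fin n) (Fin n) ℝ)
    (hQ : IsLaplacian Q)
    (Qd : Matrix (Fin n) (Fin n) ℝ) (hQd : IsMoorePenrose Q Qd)
    (ζ : Fin n → ℝ) (hζ : ∀ i, ζ i = Qd i i)
    (r : Fin n → ℝ)
    (hr : r = (1 / 2 : ℝ) • (Q *ᵥ ζ) + (n : ℝ)⁻¹ • (fun _ => (1 : ℝ)))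
    (R2 : ℝ)
    (hR2 : R2 = (1 / 2 : ℝ) * (ζ ⬝ᵥ (r + (n : ℝ)⁻¹ • (fun _ => (1 : ℝ)))))
    (Ω : Matrix (Fin n) (Fin n) ℝ)
    (hΩ : ∀ i j, Ω i j = ζ i + ζ j - 2 * Qd i j) :
    0 < R2 ∧ IsUnit Ω.det ∧
    Ω⁻¹ = (-(1 / 2) : ℝ) • (Q - R2⁻¹ • Matrix.vecMulVec r r) := by
  obtain ⟨h1, h2, h3, h4⟩ := hQd
  have hs : Qᵀ = Q := hQ.1
  have hu := hQ.2.2.1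
  have hn0 : (n : ℝ) ≠ 0 := by positivity
  set u : Fin n → ℝ := fun _ => (1 : ℝ) with hudef
  set J : Matrix (Fin n) (Fin n) ℝ := (n : ℝ)⁻¹ • Matrix.vecMulVec u u with hJ
  have huQ : u ᵥ* Q = 0 := by rw [← hs, Matrix.vecMul_transpose]; exact hu
  have e1 : 1 - Qd * Q = J := by
    ext i j
    rw [lap_proj hn Q hQ (1 - Qd * Q) (by simp only [Matrix.transpose_sub, Matrix.transpose_one, h4])
      (by rw [Matrix.mul_sub, ← Matrix.mul_assoc, h1]; simp)
      (by rw [Matrix.sub_mulVec, ← Matrix.mulVec_mulVec, hu]; simp [hudef])]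
    simp [hJ, Matrix.vecMulVec_apply, hudef]
  have e2 : 1 - Q * Qd = J := by
    ext i j
    rw [lap_proj hn Q hQ (1 - Q * Qd) (by simp only [Matrix.transpose_sub, Matrix.transpose_one, h3])
      (by
        have : ((1 - Q * Qd) * Q)ᵀ = 0 := by rw [Matrix.sub_mul, h1]; simp
        rw [Matrix.transpose_mul, Matrix.transpose_sub, h3, hs, Matrix.transpose_one] at this
        exact this)
      (by
        rw [Matrix.sub_mulVec, ← h3, Matrix.mulVec_transpose, ← Matrix.vecMul_vecMul, huQ]
        simp [hudef])]
    simp [hJ, Matrix.vecMulVec_apply, hudef]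
  have hQQ : Q * Qd = 1 - J := by rw [← e2]; abel
  have hQQ' : Qd * Q = 1 - J := by rw [← e1]; abel
  have hQdu : Qd *ᵥ u = 0 := by
    rw [← h2, Matrix.mul_assoc, ← Matrix.mulVec_mulVec, ← h3, Matrix.mulVec_transpose,
      ← Matrix.vecMul_vecMul, huQ]
    simp
  have huQd : u ᵥ* Qd = 0 := by
    rw [← h2, ← Matrix.vecMul_vecMul, ← h4, Matrix.vecMul_transpose, ← Matrix.mulVec_mulVec, hu]
    simp
  have hJQd : J * Qd = 0 := by
    rw [hJ, Matrix.smul_mul, Matrix.vecMulVec_mul, huQd]; simp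
  have hJQdT : J * Qdᵀ = 0 := by
    rw [hJ, Matrix.smul_mul, Matrix.vecMulVec_mul, Matrix.vecMul_transpose, hQdu]; simp
  have hQdT : Qdᵀ = Qd := by
    have a : Q * Qdᵀ = 1 - J := by
      rw [← hQQ', ← h4, Matrix.transpose_mul, hs]
    have b : Qd * (Q * Qdᵀ) = Qdᵀ := by
      rw [← Matrix.mul_assoc, hQQ', Matrix.sub_mul, hJQdT]; simp
    rw [← b, a, ← hQQ, ← Matrix.mul_assoc, h2]
  have hur : u ⬝ᵥ r = 1 := by
    rw [hr, dotProduct_add, dotProduct_smul, Matrix.dotProduct_mulVec, huQ]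
    simp [hudef, dotProduct, hn0]
  have hΩ' : Ω = Matrix.vecMulVec ζ u + Matrix.vecMulVec u ζ - (2 : ℝ) • Qd := by
    ext i j
    simp [hΩ, Matrix.vecMulVec_apply, hudef]
  have hQdr : Qd *ᵥ r = (1 / 2 : ℝ) • (ζ - ((n : ℝ)⁻¹ * (u ⬝ᵥ ζ)) • u) := by
    rw [hr, Matrix.mulVec_add, Matrix.mulVec_smul, Matrix.mulVec_smul, hQdu, Matrix.mulVec_mulVec,
      hQQ', Matrix.sub_mulVec, hJ, Matrix.smul_mulVec, Matrix.vecMulVec_mulVec]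
    ext i
    simp [hudef]
  have hΩr : Ω *ᵥ r = (2 * R2) • u := by
    rw [hΩ', Matrix.sub_mulVec, Matrix.add_mulVec, Matrix.vecMulVec_mulVec,
      Matrix.vecMulVec_mulVec, Matrix.smul_mulVec, hQdr, hur, hR2, dotProduct_add,
      dotProduct_smul, dotProduct_comm u ζ]
    ext i
    simp [hudef]
  have hζQ : ζ ᵥ* Q = (2 : ℝ) • (r - (n : ℝ)⁻¹ • u) := by
    rw [← hs, Matrix.vecMul_transpose, hr]
    ext i
    simp
  have hΩQ : Ω * Q = (2 : ℝ) • Matrix.vecMulVec u r - (2 : ℝ) • 1 := by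
    rw [hΩ', Matrix.sub_mul, Matrix.add_mul, Matrix.vecMulVec_mul, Matrix.vecMulVec_mul,
      Matrix.smul_mul, hQQ', huQ, hζQ, hJ]
    ext i j
    simp [Matrix.vecMulVec_apply, hudef]
    ring
  have hζx : ∀ i, ζ i = (fun k => Qd k i) ⬝ᵥ (Q *ᵥ (fun k => Qd k i)) := by
    intro i
    have : Qdᵀ * (Q * Qd) = Qd := by rw [hQdT, ← Matrix.mul_assoc, h2]
    rw [hζ]
    conv_lhs => rw [← this]
    simp [Matrix.mul_apply, dotProduct, Matrix.mulVec]
  have hζpos : ∀ i, 0 < ζ i := by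
    intro i
    rw [hζx i]
    refine lt_of_le_of_ne (lap_nonneg Q hQ _) fun h0 => ?_
    have hc := lap_ker Q hQ _ h0.symm
    have hii := congrFun (congrFun hQQ i) i
    have hz : (Q * Qd) i i = 0 := by
      have hrow : ∑ j, Q i j = 0 := by
        simpa [Matrix.mulVec, dotProduct, hudef] using congrFun hu i
      rw [Matrix.mul_apply, Finset.sum_congr rfl (fun k _ => by rw [hc k i]), ← Finset.sum_mul,
        hrow, zero_mul]
    rw [hz] at hii
    simp [hJ, Matrix.vecMulVec_apply, hudef] at hii
    have : (n : ℝ) = 1 := by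
      field_simp at hii
      linarith
    have : n = 1 := by exact_mod_cast this
    omega
  have hRpos : 0 < R2 := by
    have hsum : 0 < ζ ⬝ᵥ u := by
      simp only [dotProduct, hudef, mul_one]
      exact Finset.sum_pos (fun i _ => hζpos i) ⟨⟨0, by omega⟩, Finset.mem_univ _⟩
    have hq := lap_nonneg Q hQ ζ
    have hni : 0 < (n : ℝ)⁻¹ := by positivity
    rw [hR2, hr]
    simp only [dotProduct_add, dotProduct_smul, smul_eq_mul]
    have := mul_pos hni hsum
    linarith
  have hinv : Ω * ((-(1 / 2) : ℝ) • (Q - R2⁻¹ • Matrix.vecMulVec r r)) = 1 := by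
    rw [Matrix.mul_smul, Matrix.mul_sub, Matrix.mul_smul, Matrix.mul_vecMulVec, hΩr, hΩQ]
    ext i j
    simp [Matrix.vecMulVec_apply, hudef]
    field_simp
    ring
  exact ⟨hRpos, Matrix.isUnit_det_of_right_inverse hinv, Matrix.inv_eq_right_inv hinv⟩
end

section
/- Let n ≥ 2, let Q be an n×n Laplacian matrix, and let W be a nonempty proper subset of the index set. Then the principal submatrix Q_{WW} (rows and columns restricted to W) is positive definite; in particular it is invertible. -/
open Matrix

theorem stmt_11 {n : ℕ} (hn : 2 ≤ n) (Q : Matrix (Fin n) (Fin n) ℝ)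
    (hQ : IsLaplacian Q)
    (W : Finset (Fin n)) (hW : W.Nonempty) (hWu : W ≠ Finset.univ) :
    (Q.submatrix (Subtype.val : ↥W → Fin n) (Subtype.val : ↥W → Fin n)).PosDef ∧
    IsUnit (Q.submatrix (Subtype.val : ↥W → Fin n) (Subtype.val : ↥W → Fin n)).det := by
  obtain ⟨hs, hneg, hrow, hirr⟩ := hQ
  have hsym : ∀ i j, Q i j = Q j i := fun i j => hs.apply j i
  suffices h : (Q.submatrix (Subtype.val : ↥W → Fin n) (Subtype.val : ↥W → Fin n)).PosDef from
    ⟨h, (Matrix.isUnit_iff_isUnit_det _).1 h.isUnit⟩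
  refine Matrix.PosDef.of_dotProduct_mulVec_pos ?_ ?_
  · ext i j
    simp [hsym j.1 i.1]
  intro x hx
  let y : Fin n → ℝ := fun i => if h : i ∈ W then x ⟨i, h⟩ else 0
  have hy0 : ∀ i, i ∉ W → y i = 0 := fun i hi => by simp [y, hi]
  have hyx : ∀ i : ↥W, y i.1 = x i := fun i => by simp [y]
  have hext : ∀ f : Fin n → ℝ, (∀ i, i ∉ W → f i = 0) → ∑ i : ↥W, f i.1 = ∑ i, f i := by
    intro f hf
    rw [Finset.sum_coe_sort W f]
    exact Finset.sum_subset (Finset.subset_univ _) (fun i _ hi => hf i hi)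
  have hq : star x ⬝ᵥ ((Q.submatrix (Subtype.val : ↥W → Fin n) (Subtype.val : ↥W → Fin n)) *ᵥ x)
      = ∑ i, y i * ∑ j, Q i j * y j := by
    rw [← hext _ (fun i hi => by rw [hy0 i hi, zero_mul])]
    simp only [dotProduct, mulVec, submatrix_apply, Pi.star_apply, star_trivial]
    refine Finset.sum_congr rfl fun i _ => ?_
    rw [hyx, ← hext (fun j => Q i.1 j * y j) (fun j hj => by simp only [hy0 j hj, mul_zero])]
    simp only [hyx]
  have hr : ∀ i, ∑ j, Q i j = 0 := fun i => by
    have := congrFun hrow i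
    simpa [mulVec, dotProduct] using this
  have hr2 : ∀ j, ∑ i, Q i j = 0 := fun j => by
    rw [← hr j]
    exact Finset.sum_congr rfl fun i _ => hsym i j
  have hid : ∑ i, ∑ j, -Q i j * (y i - y j) ^ 2 = 2 * ∑ i, y i * ∑ j, Q i j * y j := by
    have e : ∀ i j, -Q i j * (y i - y j) ^ 2
        = 2 * (y i * (Q i j * y j)) - y i ^ 2 * Q i j - y j ^ 2 * Q i j := fun i j => by ring
    have h1 : ∑ i, ∑ j, y i ^ 2 * Q i j = 0 := by
      simp [← Finset.mul_sum, hr]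
    have h2 : ∑ i, ∑ j, y j ^ 2 * Q i j = 0 := by
      rw [Finset.sum_comm]
      simp [← Finset.mul_sum, hr2]
    simp only [e, Finset.sum_sub_distrib, h1, h2, sub_zero, Finset.mul_sum]
  have hnn : ∀ i j, 0 ≤ -Q i j * (y i - y j) ^ 2 := by
    intro i j
    by_cases hij : i = j
    · simp [hij]
    · exact mul_nonneg (neg_nonneg.2 (hneg i j hij)) (sq_nonneg _)
  rw [hq]
  suffices h : 0 < ∑ i, ∑ j, -Q i j * (y i - y j) ^ 2 by linarith
  obtain ⟨k, hk⟩ := Function.ne_iff.1 hx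
  obtain ⟨i, hi, j, hj, hQij⟩ := hirr (Finset.univ.filter fun i => y i ≠ 0)
    ⟨k.1, by simpa [hyx] using hk⟩ (by
      intro h
      apply hWu
      rw [Finset.eq_univ_iff_forall] at h ⊢
      intro i
      by_contra hi
      have := h i
      simp [hy0 i hi] at this)
  simp only [Finset.mem_filter, Finset.mem_univ, true_and, not_not] at hi hj
  have hne : i ≠ j := fun h => hi (h ▸ hj)
  have hp : 0 < -Q i j * (y i - y j) ^ 2 := by
    have := lt_of_le_of_ne (hneg i j hne) hQij
    rw [hj, sub_zero]
    exact mul_pos (by linarith) (by positivity)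
  exact Finset.sum_pos' (fun i _ => Finset.sum_nonneg fun j _ => hnn i j)
    ⟨i, Finset.mem_univ _, Finset.sum_pos' (fun j _ => hnn i j) ⟨j, Finset.mem_univ _, hp⟩⟩
end

section
/- Let n ≥ 2, let Q be an n×n Laplacian matrix, and let V be a nonempty proper subset of the index set with |V| = v. Then the Schur complement Q/V^c = Q_{VV} − Q_{VV^c}·(Q_{V^cV^c})⁻¹·Q_{V^cV} satisfies (Q/V^c)† = C·(Q†)_{VV}·C, where C = I − u·uᵀ/v is the v×v centering matrix and † denotes the Moore–Penrose pseudoinverse; that is, the Schur complement of the Laplacian is the canonical pseudoinverse Gram matrix of the corresponding face of the associated simplex. -/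
open Matrix

/-- The Schur complement `Q/Vᶜ` of `Q` with respect to the removed index set `Vᶜ`
(keeping the indices in `V`): `Q_{VV} − Q_{VVᶜ}·(Q_{VᶜVᶜ})⁻¹·Q_{VᶜV}`. -/
noncomputable def schurKeep {m : Type*} [Fintype m] [DecidableEq m]
    (Q : Matrix m m ℝ) (V : Finset m) : Matrix ↥V ↥V ℝ :=
  Q.submatrix (Subtype.val : ↥V → m) (Subtype.val : ↥V → m) -
    Q.submatrix (Subtype.val : ↥V → m) (Subtype.val : ↥(Vᶜ) → m) *
      (Q.submatrix (Subtype.val : ↥(Vᶜ) → m) (Subtype.val : ↥(Vᶜ) → m))⁻¹ *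
      Q.submatrix (Subtype.val : ↥(Vᶜ) → m) (Subtype.val : ↥V → m)

/-- The centering matrix `I − u·uᵀ/v` on the index set `V`. -/
noncomputable def centering {m : Type*} [Fintype m] [DecidableEq m] (V : Finset m) :
    Matrix ↥V ↥V ℝ :=
  1 - (V.card : ℝ)⁻¹ • Matrix.of (fun _ _ => (1 : ℝ))

lemma lap_const {m : Type*} [Fintype m] [DecidableEq m] {Q : Matrix m m ℝ}
    (hQ : IsLaplacian Q) (x : m → ℝ) (hx : x ⬝ᵥ Q *ᵥ x = 0) (i₀ j₀ : m) : x i₀ = x j₀ := by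
  obtain ⟨hs, hneg, hz, hirr⟩ := hQ
  have hrow : ∀ i, ∑ j, Q i j = 0 := by
    intro i
    have := congrFun hz i
    simpa [Matrix.mulVec, dotProduct] using this
  have hcol : ∀ j, ∑ i, Q i j = 0 := by
    intro j
    rw [← hrow j]
    exact Finset.sum_congr rfl fun i _ => hs.apply j i
  have h1 : ∑ i, ∑ j, x i * Q i j * x j = 0 := by
    rw [← hx]
    simp [Matrix.mulVec, dotProduct, Finset.mul_sum, mul_assoc]
  have h2 : ∑ i, ∑ j, Q i j * x i ^ 2 = 0 := by
    simp [← Finset.sum_mul, hrow]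
  have h3 : ∑ i, ∑ j, Q i j * x j ^ 2 = 0 := by
    rw [Finset.sum_comm]
    simp [← Finset.sum_mul, hcol]
  have h4 : ∑ i, ∑ j, -(Q i j * (x i - x j) ^ 2) = 0 := by
    have : ∀ i j, -(Q i j * (x i - x j) ^ 2)
        = 2 * (x i * Q i j * x j) - Q i j * x i ^ 2 - Q i j * x j ^ 2 := by
      intro i j; ring
    simp only [this, Finset.sum_sub_distrib, ← Finset.mul_sum, h1, h2, h3]
    simp
  have hnn : ∀ i j, 0 ≤ -(Q i j * (x i - x j) ^ 2) := by
    intro i j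
    by_cases h : i = j
    · simp [h]
    · have := hneg i j h
      nlinarith [sq_nonneg (x i - x j)]
  have h5 : ∀ i j, -(Q i j * (x i - x j) ^ 2) = 0 := by
    intro i j
    have a := (Finset.sum_eq_zero_iff_of_nonneg
      (fun i _ => Finset.sum_nonneg fun j _ => hnn i j)).1 h4 i (Finset.mem_univ _)
    exact (Finset.sum_eq_zero_iff_of_nonneg (fun j _ => hnn i j)).1 a j (Finset.mem_univ _)
  by_contra hne
  obtain ⟨i, hi, j, hj, hq⟩ := hirr (Finset.univ.filter fun i => x i = x i₀)
    ⟨i₀, by simp⟩ (by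
      intro h
      have : j₀ ∈ Finset.univ.filter fun i => x i = x i₀ := by rw [h]; simp
      simp at this
      exact hne this.symm)
  simp at hi hj
  have := h5 i j
  simp [hq, sub_eq_zero] at this
  exact hj (this ▸ hi)

lemma block_mul {m k l : Type*} [Fintype m] [DecidableEq m] (A B : Matrix m m ℝ) (V : Finset m)
    (f : k → m) (g : l → m) :
    (A * B).submatrix f g =
      A.submatrix f (Subtype.val : ↥V → m) * B.submatrix (Subtype.val : ↥V → m) g +
      A.submatrix f (Subtype.val : ↥(Vᶜ) → m) * B.submatrix (Subtype.val : ↥(Vᶜ) → m) g := by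
  ext i j
  simp only [Matrix.submatrix_apply, Matrix.add_apply, Matrix.mul_apply]
  rw [Finset.sum_coe_sort V (fun t => A (f i) t * B t (g j)),
    Finset.sum_coe_sort Vᶜ (fun t => A (f i) t * B t (g j)), Finset.sum_add_sum_compl]

lemma schur_block {v w k : Type*} [Fintype v] [Fintype w] [DecidableEq w]
    (A : Matrix v v ℝ) (B : Matrix v w ℝ) (D : Matrix w w ℝ) (E : Matrix w v ℝ)
    (hD : IsUnit D.det) (X X' : Matrix v k ℝ) (Y Y' : Matrix w k ℝ)
    (h1 : A * X + B * Y = X') (h2 : E * X + D * Y = Y') :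
    (A - B * D⁻¹ * E) * X = X' - B * D⁻¹ * Y' := by
  rw [← h1, ← h2, Matrix.mul_add, Matrix.sub_mul]
  have : B * D⁻¹ * (D * Y) = B * Y := by
    rw [Matrix.mul_assoc, Matrix.nonsing_inv_mul_cancel_left _ _ hD]
  rw [this, Matrix.mul_assoc (B * D⁻¹) E X]
  abel

lemma lap_unit {m : Type*} [Fintype m] [DecidableEq m] {Q : Matrix m m ℝ}
    (hQ : IsLaplacian Q) (V : Finset m) (hV : V.Nonempty) :
    IsUnit (Q.submatrix (Subtype.val : ↥(Vᶜ) → m) (Subtype.val : ↥(Vᶜ) → m)).det := by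
  rw [isUnit_iff_ne_zero]
  intro h0
  obtain ⟨x, hx, hx0⟩ := Matrix.exists_mulVec_eq_zero_iff.2 h0
  let y : m → ℝ := fun i => if h : i ∈ Vᶜ then x ⟨i, h⟩ else 0
  have hy : y ⬝ᵥ Q *ᵥ y = 0 := by
    simp only [dotProduct]
    apply Finset.sum_eq_zero
    intro i _
    by_cases h : i ∈ Vᶜ
    · have := congrFun hx0 ⟨i, h⟩
      have e : (Q *ᵥ y) i = 0 := by
        simp only [Matrix.mulVec, dotProduct, Matrix.submatrix_apply, Pi.zero_apply] at this ⊢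
        rw [← Finset.sum_add_sum_compl V, ← Finset.sum_coe_sort Vᶜ]
        rw [Finset.sum_eq_zero (s := V), zero_add, ← this]
        · refine Finset.sum_congr rfl fun j _ => ?_
          have : y j = x j := by simp only [y]; rw [dif_pos j.2]
          rw [this]
        · intro j hj
          simp [y, hj]
      rw [e, mul_zero]
    · simp only [y]
      rw [dif_neg h, zero_mul]
  obtain ⟨i₀, hi₀⟩ := hV
  apply hx
  ext j
  have := lap_const hQ y hy j i₀
  simp only [y] at this
  rw [dif_pos j.2, dif_neg (by simpa using hi₀)] at this
  simpa using this

lemma mp_proj {m : Type*} [Fintype m] [DecidableEq m] [Nonempty m] {Q Qd : Matrix m m ℝ}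
    (hQ : IsLaplacian Q) (h : IsMoorePenrose Q Qd) :
    ∃ c : ℝ, Q * Qd = 1 - Matrix.of (fun _ _ => c) := by
  obtain ⟨h1, -, h3, -⟩ := h
  have hs : Qᵀ = Q := hQ.1
  have hk : Q * (1 - Q * Qd) = 0 := by
    have := congrArg Matrix.transpose h1
    rw [Matrix.transpose_mul, h3, hs] at this
    rw [Matrix.mul_sub, this, Matrix.mul_one, sub_self]
  have hsym : (1 - Q * Qd)ᵀ = 1 - Q * Qd := by
    rw [Matrix.transpose_sub, h3, Matrix.transpose_one]
  have hc : ∀ i i' j, (1 - Q * Qd) i j = (1 - Q * Qd) i' j := by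
    intro i i' j
    refine lap_const hQ (fun i => (1 - Q * Qd) i j) ?_ i i'
    have : Q *ᵥ (fun i => (1 - Q * Qd) i j) = 0 := by
      ext t
      exact congrFun (congrFun hk t) j
    rw [this, dotProduct_zero]
  have hs' : ∀ i j, (1 - Q * Qd) i j = (1 - Q * Qd) j i := fun i j =>
    (congrFun (congrFun hsym j) i)
  obtain ⟨a⟩ := ‹Nonempty m›
  refine ⟨(1 - Q * Qd) a a, ?_⟩
  rw [eq_sub_iff_add_eq, add_comm, ← eq_sub_iff_add_eq]
  ext i j
  rw [Matrix.of_apply, hc i a j, hs' a j, hc j a a]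

lemma const_mul_centering {m k : Type*} [Fintype m] [DecidableEq m] (V : Finset m)
    (hV : V.Nonempty) (b : k → ℝ) :
    (Matrix.of (fun i _ => b i) : Matrix k ↥V ℝ) * centering V = 0 := by
  have hc : (V.card : ℝ) ≠ 0 := by exact_mod_cast hV.card_pos.ne'
  rw [centering, Matrix.mul_sub, Matrix.mul_one, sub_eq_zero, Matrix.mul_smul]
  ext i j
  rw [Matrix.smul_apply, Matrix.mul_apply]
  simp only [Matrix.of_apply, mul_one, Finset.sum_const, Finset.card_univ, Fintype.card_coe,
    nsmul_eq_mul, smul_eq_mul]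
  rw [inv_mul_cancel_left₀ hc]

/-- The Schur complement of a Laplacian is the canonical pseudoinverse Gram matrix
of the corresponding face: `(Q/Vᶜ)† = C·(Q†)_{VV}·C`. -/
theorem stmt_12 {n : ℕ} (hn : 2 ≤ n) (Q : Matrix (Fin n) (Fin n) ℝ)
    (hQ : IsLaplacian Q)
    (Qd : Matrix (Fin n) (Fin n) ℝ) (hQd : IsMoorePenrose Q Qd)
    (V : Finset (Fin n)) (hV : V.Nonempty) (hVu : V ≠ Finset.univ) :
    IsMoorePenrose (schurKeep Q V)
      (centering V *
        Qd.submatrix (Subtype.val : ↥V → Fin n) (Subtype.val : ↥V → Fin n) *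
        centering V) := by
  set S := schurKeep Q V with hS
  set C := centering V with hC
  have hs : Qᵀ = Q := hQ.1
  have hCt : Cᵀ = C := by
    ext i j
    simp [hC, centering, Matrix.one_apply, eq_comm]
  have hCC : C * C = C := by
    have h0 := const_mul_centering V hV (fun _ : ↥V => (V.card : ℝ)⁻¹)
    have h1 : C = 1 - (Matrix.of (fun _ _ => (V.card : ℝ)⁻¹) : Matrix ↥V ↥V ℝ) := by
      ext i j; simp [hC, centering]
    calc C * C = (1 - (Matrix.of (fun _ _ => (V.card : ℝ)⁻¹) : Matrix ↥V ↥V ℝ)) * C := by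
          rw [← h1]
      _ = C := by rw [Matrix.sub_mul, h0, Matrix.one_mul, sub_zero]
  have hD := lap_unit hQ V hV
  have hSt : Sᵀ = S := by
    simp only [hS, schurKeep, Matrix.transpose_sub, Matrix.transpose_mul,
      Matrix.transpose_nonsing_inv, Matrix.transpose_submatrix, hs, Matrix.mul_assoc]
  let J : Matrix (Fin n) (Fin n) ℝ := Matrix.of fun _ _ => 1
  have hJ : Q * J = 0 := by
    ext i j
    have := congrFun hQ.2.2.1 i
    simpa [Matrix.mul_apply, J, Matrix.mulVec, dotProduct] using this
  let vl : ↥V → Fin n := Subtype.val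
  let wl : ↥(Vᶜ) → Fin n := Subtype.val
  have hSJ : S * J.submatrix vl vl = 0 := by
    have := schur_block _ _ _ _ hD _ _ _ _
      (block_mul Q J V vl vl).symm (block_mul Q J V wl vl).symm
    rw [hJ] at this
    simpa [hS, schurKeep] using this
  have : Nonempty (Fin n) := ⟨hV.choose⟩
  obtain ⟨c, hc⟩ := mp_proj hQ hQd
  have hSQ : S * Qd.submatrix vl vl * C = C := by
    have := schur_block _ _ _ _ hD _ _ _ _
      (block_mul Q Qd V vl vl).symm (block_mul Q Qd V wl vl).symm
    rw [hc] at this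
    have e1 : (1 - Matrix.of (fun _ _ => c) : Matrix (Fin n) (Fin n) ℝ).submatrix vl vl
        = 1 - Matrix.of (fun _ _ => c) := by
      ext i j
      have : (1 : Matrix (Fin n) (Fin n) ℝ) (vl i) (vl j) = (1 : Matrix ↥V ↥V ℝ) i j := by
        rw [← Matrix.submatrix_one vl Subtype.val_injective, Matrix.submatrix_apply]
      rw [Matrix.submatrix_apply, Matrix.sub_apply, Matrix.sub_apply, this]
      rfl
    have e2 : (1 - Matrix.of (fun _ _ => c) : Matrix (Fin n) (Fin n) ℝ).submatrix wl vl
        = - Matrix.of (fun _ _ => c) := by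
      ext i j
      have : (i : Fin n) ≠ j := by
        intro h
        have h1 := i.2
        rw [h, Finset.mem_compl] at h1
        exact h1 j.2
      simp [Matrix.one_apply, wl, vl, this]
    rw [e1, e2] at this
    have h3 : S * Qd.submatrix vl vl = _ := this
    have z1 := const_mul_centering V hV (fun _ : ↥V => c)
    have z2 := const_mul_centering V hV (fun _ : ↥(Vᶜ) => c)
    rw [h3, Matrix.sub_mul, Matrix.sub_mul, Matrix.mul_assoc, Matrix.neg_mul, z1, z2]
    simp
  have hSC : S * C = S := by
    have h1 : C = 1 - (V.card : ℝ)⁻¹ • J.submatrix vl vl := by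
      ext i j; simp [hC, centering, J]
    rw [h1, Matrix.mul_sub, Matrix.mul_smul, hSJ]
    simp
  have hCS : C * S = S := by
    have := congrArg Matrix.transpose hSC
    rwa [Matrix.transpose_mul, hCt, hSt] at this
  change IsMoorePenrose S (C * Qd.submatrix vl vl * C)
  generalize hB : C * Qd.submatrix vl vl * C = B
  have hSB : S * B = C := by
    rw [← hB, ← Matrix.mul_assoc, ← Matrix.mul_assoc, hSC, hSQ]
  have hCB : C * B = B := by
    rw [← hB, ← Matrix.mul_assoc, ← Matrix.mul_assoc, hCC]
  have hBtS : Bᵀ * S = C := by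
    have := congrArg Matrix.transpose hSB
    rwa [Matrix.transpose_mul, hCt, hSt] at this
  have hBtC : Bᵀ * C = Bᵀ := by
    have := congrArg Matrix.transpose hCB
    rwa [Matrix.transpose_mul, hCt] at this
  have hBt : Bᵀ = B := by
    rw [← hBtC, ← hSB, ← Matrix.mul_assoc, hBtS, hCB]
  have hBS : B * S = C := by rw [← hBtS, hBt]
  refine ⟨?_, ?_, ?_, ?_⟩
  · rw [hSB, hCS]
  · rw [hBS, hCB]
  · rw [hSB, hCt]
  · rw [hBS, hCt]
end

section
/- Let n ≥ 2, let Q be an n×n Laplacian matrix with index set N, and let W ⊆ V ⊆ N with W nonempty and V ≠ N. Then the quotient (composition) property of the Schur complement holds: Q/(N∖W) = [Q/(N∖V)]/(V∖W), where Q/X denotes the Schur complement of Q with respect to the subset X of indices (all the required principal submatrices being invertible). -/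
open Matrix

theorem mulVec_split {m : Type*} [Fintype m] [DecidableEq m] (Q : Matrix m m ℝ) (V : Finset m)
    (f : m → ℝ) (i : m) :
    (Q *ᵥ f) i = ∑ j : ↥V, Q i j * f j + ∑ j : ↥(Vᶜ), Q i j * f j := by
  rw [Finset.sum_coe_sort V (fun j => Q i j * f j),
    Finset.sum_coe_sort (Vᶜ) (fun j => Q i j * f j), Finset.sum_add_sum_compl]
  rfl

/-- Kernel-triviality of the principal submatrix indexed by the complement of `V`. -/
def KerTriv {m : Type*} [Fintype m] (Q : Matrix m m ℝ) (V : Finset m) : Prop :=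
  ∀ f : m → ℝ, (∀ i ∈ V, f i = 0) → (∀ i, i ∉ V → (Q *ᵥ f) i = 0) → f = 0

theorem KerTriv.isUnit_det {m : Type*} [Fintype m] [DecidableEq m] {Q : Matrix m m ℝ}
    {V : Finset m} (h : KerTriv Q V) :
    IsUnit (Q.submatrix (Subtype.val : ↥(Vᶜ) → m) (Subtype.val : ↥(Vᶜ) → m)).det := by
  rw [← Matrix.isUnit_iff_isUnit_det, ← Matrix.mulVec_injective_iff_isUnit]
  rw [← Matrix.coe_mulVecLin, injective_iff_map_eq_zero]
  intro x hx
  let f : m → ℝ := fun i => if hi : i ∈ Vᶜ then x ⟨i, hi⟩ else 0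
  have hf0 : ∀ i ∈ V, f i = 0 := by
    intro i hi
    simp [f, hi]
  have hfx : ∀ j : ↥(Vᶜ), f j = x j := by
    intro j
    simp only [f, j.2, dite_true]
  have hf : f = 0 := by
    apply h f hf0
    intro i hi
    rw [mulVec_split Q V]
    have h1 : ∑ j : ↥V, Q i j * f j = 0 :=
      Finset.sum_eq_zero (fun j _ => by rw [hf0 j j.2, mul_zero])
    have h2 := congrFun hx ⟨i, Finset.mem_compl.mpr hi⟩
    rw [h1, zero_add]
    simp only [hfx]
    exact h2
  funext j
  rw [← hfx j, hf]
  rfl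

theorem schurKeep_mulVec {m : Type*} [Fintype m] [DecidableEq m] {Q : Matrix m m ℝ}
    {V : Finset m} (h : KerTriv Q V) (f : m → ℝ) (hf : ∀ i, i ∉ V → (Q *ᵥ f) i = 0)
    (i : ↥V) : (schurKeep Q V *ᵥ (fun j : ↥V => f j)) i = (Q *ᵥ f) i := by
  have hu := h.isUnit_det
  set D := Q.submatrix (Subtype.val : ↥(Vᶜ) → m) (Subtype.val : ↥(Vᶜ) → m) with hD
  have key : Q.submatrix (Subtype.val : ↥(Vᶜ) → m) (Subtype.val : ↥V → m) *ᵥ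
      (fun j : ↥V => f j) = - (D *ᵥ (fun j : ↥(Vᶜ) => f j)) := by
    funext k
    have h1 := hf k (Finset.mem_compl.mp k.2)
    rw [mulVec_split Q V] at h1
    exact eq_neg_of_add_eq_zero_left h1
  rw [schurKeep, ← hD, Matrix.sub_mulVec, ← Matrix.mulVec_mulVec, ← Matrix.mulVec_mulVec, key,
    Matrix.mulVec_neg, Matrix.mulVec_mulVec, Matrix.nonsing_inv_mul _ hu, Matrix.one_mulVec,
    Matrix.mulVec_neg, sub_neg_eq_add, mulVec_split Q V]
  rfl

theorem exists_ext {m : Type*} [Fintype m] [DecidableEq m] {Q : Matrix m m ℝ}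
    {V : Finset m} (h : KerTriv Q V) (x : ↥V → ℝ) :
    ∃ f : m → ℝ, (∀ j : ↥V, f j = x j) ∧ ∀ i, i ∉ V → (Q *ᵥ f) i = 0 := by
  have hu := h.isUnit_det
  set D := Q.submatrix (Subtype.val : ↥(Vᶜ) → m) (Subtype.val : ↥(Vᶜ) → m) with hD
  let z : ↥(Vᶜ) → ℝ :=
    - (D⁻¹ *ᵥ (Q.submatrix (Subtype.val : ↥(Vᶜ) → m) (Subtype.val : ↥V → m) *ᵥ x))
  have hz : Q.submatrix (Subtype.val : ↥(Vᶜ) → m) (Subtype.val : ↥V → m) *ᵥ x + D *ᵥ z = 0 := by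
    simp only [z]
    rw [Matrix.mulVec_neg, Matrix.mulVec_mulVec, Matrix.mul_nonsing_inv _ hu, Matrix.one_mulVec,
      add_neg_cancel]
  let f : m → ℝ := fun i => if hi : i ∈ V then x ⟨i, hi⟩ else z ⟨i, Finset.mem_compl.mpr hi⟩
  have hfx : ∀ j : ↥V, f j = x j := by
    intro j
    simp only [f, j.2, dite_true]
  have hfz : ∀ j : ↥(Vᶜ), f j = z j := by
    intro j
    simp only [f, Finset.mem_compl.mp j.2, dite_false]
  refine ⟨f, hfx, fun i hi => ?_⟩
  rw [mulVec_split Q V]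
  simp only [hfx, hfz]
  exact congrFun hz ⟨i, Finset.mem_compl.mpr hi⟩

theorem IsLaplacian.kerTriv {m : Type*} [Fintype m] [DecidableEq m] {Q : Matrix m m ℝ}
    (hQ : IsLaplacian Q) {V : Finset m} (hV : V.Nonempty) : KerTriv Q V := by
  obtain ⟨hs, hneg, hrow, hirr⟩ := hQ
  intro f hf0 hfQ
  have hr : ∀ i, ∑ j, Q i j = 0 := by
    intro i
    have := congrFun hrow i
    simpa [Matrix.mulVec, dotProduct] using this
  have hc : ∀ j, ∑ i, Q i j = 0 := by
    intro j
    rw [← hr j]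
    exact Finset.sum_congr rfl (fun i _ => hs.apply j i)
  have hq : ∑ i, ∑ j, Q i j * (f i * f j) = 0 := by
    apply Finset.sum_eq_zero
    intro i _
    have h1 : ∑ j, Q i j * (f i * f j) = f i * (Q *ᵥ f) i := by
      simp only [Matrix.mulVec, dotProduct, Finset.mul_sum]
      exact Finset.sum_congr rfl (fun j _ => by ring)
    rw [h1]
    by_cases hi : i ∈ V
    · rw [hf0 i hi, zero_mul]
    · rw [hfQ i hi, mul_zero]
  have ha : ∑ i, ∑ j, Q i j * (f i)^2 = 0 :=
    Finset.sum_eq_zero (fun i _ => by rw [← Finset.sum_mul, hr, zero_mul])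
  have hb : ∑ i, ∑ j, Q i j * (f j)^2 = 0 := by
    rw [Finset.sum_comm]
    exact Finset.sum_eq_zero (fun i _ => by rw [← Finset.sum_mul, hc, zero_mul])
  have htot : ∑ i, ∑ j, -Q i j * (f i - f j)^2 = 0 := by
    have : ∑ i, ∑ j, -Q i j * (f i - f j)^2 = 2 * ∑ i, ∑ j, Q i j * (f i * f j)
        - ∑ i, ∑ j, Q i j * (f i)^2 - ∑ i, ∑ j, Q i j * (f j)^2 := by
      simp only [Finset.mul_sum, ← Finset.sum_sub_distrib]
      exact Finset.sum_congr rfl (fun i _ => Finset.sum_congr rfl (fun j _ => by ring))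
    rw [this, hq, ha, hb]
    norm_num
  have hnn : ∀ i j, 0 ≤ -Q i j * (f i - f j)^2 := by
    intro i j
    by_cases hij : i = j
    · simp [hij]
    · exact mul_nonneg (neg_nonneg.mpr (hneg i j hij)) (sq_nonneg _)
  have hz : ∀ i j, -Q i j * (f i - f j)^2 = 0 := by
    intro i j
    have h1 := (Finset.sum_eq_zero_iff_of_nonneg
      (fun i _ => Finset.sum_nonneg (fun j _ => hnn i j))).mp htot i (Finset.mem_univ i)
    exact (Finset.sum_eq_zero_iff_of_nonneg (fun j _ => hnn i j)).mp h1 j (Finset.mem_univ j)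
  by_contra hne
  obtain ⟨k, hk⟩ := Function.ne_iff.mp hne
  obtain ⟨v, hv⟩ := hV
  obtain ⟨i, hi, j, hj, hij⟩ := hirr (Finset.univ.filter (fun i => f i = 0))
    ⟨v, by simpa using hf0 v hv⟩ (fun h => hk (by
      have := Finset.mem_univ k
      rw [← h] at this
      simpa using this))
  have hi' : f i = 0 := by simpa using hi
  have hj' : f j ≠ 0 := by simpa using hj
  have := hz i j
  rw [hi', zero_sub] at this
  simp [hij, hj'] at this

/-- The quotient (composition) property of the Schur complement:
`Q/(N∖W) = [Q/(N∖V)]/(V∖W)` for `W ⊆ V ⊆ N`.  Here `schurKeep Q W = Q/(N∖W)`,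
`schurKeep Q V = Q/(N∖V)`, and taking the Schur complement of the latter that keeps
the indices of `W` (viewed inside `V`) is `[Q/(N∖V)]/(V∖W)`. -/
theorem stmt_13 {n : ℕ} (hn : 2 ≤ n) (Q : Matrix (Fin n) (Fin n) ℝ)
    (hQ : IsLaplacian Q)
    (W V : Finset (Fin n)) (hW : W.Nonempty) (hWV : W ⊆ V) (hV : V ≠ Finset.univ) :
    ∀ (i j : Fin n) (hi : i ∈ W) (hj : j ∈ W),
      schurKeep Q W ⟨i, hi⟩ ⟨j, hj⟩ =
        schurKeep (schurKeep Q V) (W.subtype (· ∈ V))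
          ⟨⟨i, hWV hi⟩, Finset.mem_subtype.mpr hi⟩
          ⟨⟨j, hWV hj⟩, Finset.mem_subtype.mpr hj⟩ := by
  intro i j hi hj
  have hkW : KerTriv Q W := hQ.kerTriv hW
  have hkV : KerTriv Q V := hQ.kerTriv (hW.mono hWV)
  have hkS : KerTriv (schurKeep Q V) (W.subtype (· ∈ V)) := by
    intro x hx0 hxS
    obtain ⟨f, hfx, hfV⟩ := exists_ext hkV x
    have hxf : (fun j : ↥V => f j) = x := funext hfx
    have hf : f = 0 := by
      apply hkW f
      · intro k hk
        rw [hfx ⟨k, hWV hk⟩]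
        exact hx0 _ (Finset.mem_subtype.mpr hk)
      · intro k hk
        by_cases hkv : k ∈ V
        · have h1 := schurKeep_mulVec hkV f hfV ⟨k, hkv⟩
          rw [hxf] at h1
          rw [← h1]
          exact hxS _ (fun h => hk (Finset.mem_subtype.mp h))
        · exact hfV k hkv
    rw [← hxf, hf]
    rfl
  obtain ⟨f, hfx, hfW⟩ := exists_ext hkW (Pi.single (⟨j, hj⟩ : ↥W) (1 : ℝ))
  have hfV : ∀ k, k ∉ V → (Q *ᵥ f) k = 0 := fun k hk => hfW k (fun h => hk (hWV h))
  have h1 := schurKeep_mulVec hkW f hfW ⟨i, hi⟩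
  have h2 := schurKeep_mulVec hkV f hfV
  have h3 := schurKeep_mulVec hkS (fun k : ↥V => f k) (fun k hk => by
    rw [h2 k]
    exact hfW k (fun h => hk (Finset.mem_subtype.mpr h)))
    ⟨⟨i, hWV hi⟩, Finset.mem_subtype.mpr hi⟩
  rw [h2] at h3
  have e1 : (fun k : ↥W => f k) = Pi.single (⟨j, hj⟩ : ↥W) (1 : ℝ) := funext hfx
  have e2 : (fun k : ↥(W.subtype (· ∈ V)) => f (k : ↥V)) =
      Pi.single (⟨⟨j, hWV hj⟩, Finset.mem_subtype.mpr hj⟩ : ↥(W.subtype (· ∈ V))) (1 : ℝ) := by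
    funext k
    have := hfx ⟨k, Finset.mem_subtype.mp k.2⟩
    rw [this]
    simp only [Pi.single_apply, Subtype.ext_iff]
  rw [e1, Matrix.mulVec_single_one] at h1
  rw [e2, Matrix.mulVec_single_one] at h3
  exact h1.trans h3.symm
end

section
/- Let n ≥ 2, let Q be an n×n Laplacian matrix with Moore–Penrose pseudoinverse Q†, and let i, j, k be three pairwise distinct indices. Then (e_i − e_j)ᵀ·Q†·(e_k − e_j) ≥ 0; geometrically, every angle of every triangular face of the simplex associated to Q is non-obtuse. -/
open Matrix

theorem lap_min {n : ℕ} (Q : Matrix (Fin n) (Fin n) ℝ)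
    (hQ : IsLaplacian Q) (x : Fin n → ℝ) (j : Fin n)
    (h : ∀ a, a ≠ j → 0 ≤ (Q *ᵥ x) a) (i : Fin n) : x j ≤ x i := by
  obtain ⟨-, hoff, hu, hirr⟩ := hQ
  obtain ⟨m, -, hm⟩ := Finset.exists_min_image Finset.univ x ⟨j, Finset.mem_univ j⟩
  by_contra hlt
  have hmj : x m < x j := lt_of_le_of_lt (hm i (Finset.mem_univ i)) (not_le.mp hlt)
  obtain ⟨a, ha, l, hl, hal⟩ := hirr (Finset.univ.filter (fun a => x a = x m))
    ⟨m, by simp⟩ (by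
      intro he
      have : j ∈ Finset.univ.filter (fun a => x a = x m) := by rw [he]; simp
      simp at this
      linarith)
  simp only [Finset.mem_filter, Finset.mem_univ, true_and] at ha hl
  have haj : a ≠ j := by rintro rfl; linarith
  have hpos := h a haj
  have hua : ∑ l, Q a l = 0 := by
    have := congrFun hu a
    simpa [Matrix.mulVec, dotProduct] using this
  have heq : (Q *ᵥ x) a = ∑ l, Q a l * (x l - x m) := by
    simp only [mul_sub, Finset.sum_sub_distrib, ← Finset.sum_mul, hua]
    simp [Matrix.mulVec, dotProduct]
  have hneg : ∑ l, Q a l * (x l - x m) < ∑ l : Fin n, (0 : ℝ) := by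
    apply Finset.sum_lt_sum
    · intro b _
      have hb := hm b (Finset.mem_univ b)
      by_cases hab : a = b
      · subst hab; rw [ha]; simp
      · exact mul_nonpos_of_nonpos_of_nonneg (hoff a b hab) (by linarith)
    · refine ⟨l, Finset.mem_univ l, ?_⟩
      have hne : a ≠ l := by rintro rfl; exact hl ha
      have h1 : Q a l < 0 := lt_of_le_of_ne (hoff a l hne) hal
      have h2 : x m < x l := lt_of_le_of_ne (hm l (Finset.mem_univ l)) (Ne.symm hl)
      exact mul_neg_of_neg_of_pos h1 (by linarith)
  simp only [Finset.sum_const_zero] at hneg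
  linarith

theorem lap_solve {n : ℕ} (Q : Matrix (Fin n) (Fin n) ℝ)
    (hQ : IsLaplacian Q) (Qd : Matrix (Fin n) (Fin n) ℝ) (hQd : IsMoorePenrose Q Qd)
    (b : Fin n → ℝ) (hb : ∑ a, b a = 0) : Q *ᵥ (Qd *ᵥ b) = b := by
  obtain ⟨h1, -, h3, -⟩ := hQd
  have hs : Qᵀ = Q := hQ.1
  have hQP : Q * (Q * Qd) = Q := by
    have := congrArg Matrix.transpose h1
    rwa [Matrix.transpose_mul, h3, hs] at this
  set y := Q *ᵥ (Qd *ᵥ b) - b with hy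
  have hQy : Q *ᵥ y = 0 := by
    rw [hy, Matrix.mulVec_sub, Matrix.mulVec_mulVec, Matrix.mulVec_mulVec, Matrix.mul_assoc, hQP,
      sub_self]
  have hconst : ∀ a c, y a = y c := fun a c =>
    le_antisymm (lap_min Q hQ y a (by simp [hQy]) c) (lap_min Q hQ y c (by simp [hQy]) a)
  have hsum : ∑ a, y a = 0 := by
    have h0 : (fun _ => (1 : ℝ)) ⬝ᵥ (Q *ᵥ (Qd *ᵥ b)) = 0 := by
      rw [Matrix.dotProduct_mulVec, ← Matrix.mulVec_transpose, hs, hQ.2.2.1, zero_dotProduct]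
    simp only [dotProduct, one_mul] at h0
    simp only [hy, Pi.sub_apply, Finset.sum_sub_distrib, h0, hb, sub_zero]
  have hy0 : y = 0 := by
    funext a
    have : ∑ c, y c = n * y a := by
      rw [Finset.sum_congr rfl (fun c _ => hconst c a)]; simp
    rw [hsum] at this
    have hn : (n : ℝ) ≠ 0 := by
      have := a.pos
      positivity
    simpa [hn] using this.symm
  exact sub_eq_zero.mp hy0

/-- Every angle of every triangular face of the simplex of a Laplacian is non-obtuse:
`(e_i − e_j)ᵀ·Q†·(e_k − e_j) ≥ 0` for pairwise distinct `i, j, k`. -/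
theorem stmt_16 {n : ℕ} (hn : 2 ≤ n) (Q : Matrix (Fin n) (Fin n) ℝ)
    (hQ : IsLaplacian Q)
    (Qd : Matrix (Fin n) (Fin n) ℝ) (hQd : IsMoorePenrose Q Qd)
    (i j k : Fin n) (hij : i ≠ j) (hjk : j ≠ k) (hik : i ≠ k) :
    0 ≤ (Pi.single i (1 : ℝ) - Pi.single j 1) ⬝ᵥ
      (Qd *ᵥ (Pi.single k (1 : ℝ) - Pi.single j 1)) := by
  have hs := lap_solve Q hQ Qd hQd (Pi.single k (1 : ℝ) - Pi.single j 1)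
    (by simp [Finset.sum_sub_distrib])
  have := lap_min Q hQ _ j (fun a ha => by
    rw [hs]
    simp only [Pi.sub_apply, Pi.single_apply, ha, if_false, sub_zero]
    split_ifs <;> norm_num) i
  rw [sub_dotProduct, single_one_dotProduct, single_one_dotProduct]
  linarith
end
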